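/- For every N ≥ 1 and every n ∈ ℕ, the following are equivalent: (1) there exists an ℝ-linear map f : ℝⁿ → M(N,ℝ) such that f(v) is symmetric and f(v)² = ‖v‖² I_N for all v ∈ ℝⁿ; (2) there exists an ℝ-linear map f : ℝⁿ → M(N,ℝ) such that every f(v) is symmetric and f(v) is invertible for every nonzero v; (3) n ≤ ρ(N/2) + 1. (Entry 𝔤 = 𝔤𝔩(N,ℝ) of the Hurwitz–Radon value theorem: ρ⁽¹⁾ = ρ⁽²⁾ = ρ(N/2)+1.) -/

import Mathlib

open Matrix

/-- Extended Hurwitz–Radon number: writing the 2-adic valuation of `t` as `4a + b`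
with `a ∈ ℤ` and `b ∈ {0,1,2,3}`, `ρ(t) := 8a + 2^b`. -/
noncomputable def hrRho (t : ℚ) : ℤ :=
  8 * (padicValRat 2 t / 4) + 2 ^ (padicValRat 2 t % 4).toNat

set_option linter.unusedSectionVars false

theorem hr_rank_le {H : Type} [NormedAddCommGroup H] [InnerProductSpace ℝ H] [CompleteSpace H]
    {X : Type} [AddCommGroup X] [Module ℝ X] (T T' : X →ₗ[ℝ] H) (s : X → ℝ) (c δ : ℝ)
    (hδ : δ < c) (hδ0 : 0 ≤ δ) (hs : ∀ u, 0 ≤ s u) (h1 : ∀ u, c * s u ≤ ‖T u‖)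
    (h2 : ∀ u, ‖T u - T' u‖ ≤ δ * s u) :
    Module.rank ℝ (LinearMap.range T')ᗮ ≤ Module.rank ℝ (LinearMap.range T)ᗮ := by
  have hc : 0 < c := lt_of_le_of_lt hδ0 hδ
  let p : H →ₗ[ℝ] (LinearMap.range T)ᗮ := ((LinearMap.range T)ᗮ.orthogonalProjectionOnto : H →L[ℝ] _)
  refine LinearMap.rank_le_of_injective (p ∘ₗ (LinearMap.range T')ᗮ.subtype) ?_
  rw [← LinearMap.ker_eq_bot, LinearMap.ker_eq_bot']
  rintro ⟨y, hy⟩ hpy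
  have hy2 : y ∈ (LinearMap.range T)ᗮᗮ := by
    have : (LinearMap.range T)ᗮ.orthogonalProjectionOnto y = 0 := hpy
    exact Submodule.orthogonalProjectionOnto_eq_zero_iff.1 this
  rw [Submodule.orthogonal_orthogonal_eq_closure] at hy2
  have hy3 : y ∈ closure ((LinearMap.range T : Submodule ℝ H) : Set H) := hy2
  -- key inequality on the closure
  have key : ∀ z ∈ closure ((LinearMap.range T : Submodule ℝ H) : Set H),
      c * inner ℝ y z ≤ δ * (‖y‖ * ‖z‖) := by
    have hcl : IsClosed {z : H | c * inner ℝ y z ≤ δ * (‖y‖ * ‖z‖)} :=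
      isClosed_le (by fun_prop) (by fun_prop)
    refine fun z hz => closure_minimal ?_ hcl hz
    rintro _ ⟨u, rfl⟩
    have h0 : inner ℝ y (T' u) = 0 := by
      rw [Submodule.mem_orthogonal'] at hy
      exact hy _ ⟨u, rfl⟩
    have e1 : inner ℝ y (T u) = inner ℝ y (T u - T' u) := by rw [inner_sub_right, h0, sub_zero]
    have e2 : inner ℝ y (T u) ≤ ‖y‖ * (δ * s u) := by
      rw [e1]
      exact (real_inner_le_norm _ _).trans (mul_le_mul_of_nonneg_left (h2 u) (norm_nonneg _))
    show c * inner ℝ y (T u) ≤ δ * (‖y‖ * ‖T u‖)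
    calc c * inner ℝ y (T u) ≤ c * (‖y‖ * (δ * s u)) := mul_le_mul_of_nonneg_left e2 hc.le
      _ = δ * ‖y‖ * (c * s u) := by ring
      _ ≤ δ * ‖y‖ * ‖T u‖ := mul_le_mul_of_nonneg_left (h1 u) (by positivity)
      _ = _ := by ring
  have := key y hy3
  rw [real_inner_self_eq_norm_sq] at this
  have hz : ‖y‖ ^ 2 ≤ 0 := by
    by_contra hcon
    push Not at hcon
    nlinarith
  have : y = 0 := by
    have : ‖y‖ = 0 := by nlinarith [norm_nonneg y]
    exact norm_eq_zero.1 this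
  exact Subtype.ext this

theorem hr_rank_path {H : Type} [NormedAddCommGroup H] [InnerProductSpace ℝ H] [CompleteSpace H]
    {X : Type} [AddCommGroup X] [Module ℝ X] (T : ℝ → X →ₗ[ℝ] H) (s : X → ℝ) (c C : ℝ)
    (hc : 0 < c) (hC : 0 ≤ C) (hs : ∀ u, 0 ≤ s u)
    (h1 : ∀ t, 0 ≤ t → t ≤ 1 → ∀ u, c * s u ≤ ‖T t u‖)
    (h2 : ∀ t t' u, ‖T t u - T t' u‖ ≤ |t - t'| * (C * s u)) :
    Module.rank ℝ (LinearMap.range (T 0))ᗮ = Module.rank ℝ (LinearMap.range (T 1))ᗮ := by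
  have step : ∀ t t', 0 ≤ t → t ≤ 1 → 0 ≤ t' → t' ≤ 1 → |t - t'| * C < c →
      Module.rank ℝ (LinearMap.range (T t))ᗮ = Module.rank ℝ (LinearMap.range (T t'))ᗮ := by
    intro t t' a b a' b' h
    apply le_antisymm
    · refine hr_rank_le (T t') (T t) s c (|t - t'| * C) h (by positivity) hs (h1 t' a' b') ?_
      intro u
      have := h2 t' t u
      rw [abs_sub_comm] at this
      linarith
    · refine hr_rank_le (T t) (T t') s c (|t - t'| * C) h (by positivity) hs (h1 t a b) ?_
      intro u
      have := h2 t t' u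
      linarith
  obtain ⟨m, hm⟩ := exists_nat_gt (C / c)
  have hm0 : (0:ℝ) < m := lt_of_le_of_lt (by positivity) hm
  have ind : ∀ k : ℕ, k ≤ m → Module.rank ℝ (LinearMap.range (T 0))ᗮ
      = Module.rank ℝ (LinearMap.range (T ((k:ℝ) / m)))ᗮ := by
    intro k
    induction k with
    | zero => intro _; rw [Nat.cast_zero, zero_div]
    | succ k ih =>
      intro hk
      rw [ih (by omega)]
      have hk' : ((k:ℝ) + 1) ≤ m := by exact_mod_cast hk
      apply step
      · positivity
      · rw [div_le_one hm0]; linarith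
      · positivity
      · rw [div_le_one hm0]; push_cast; linarith
      · have : (k:ℝ) / m - ((k + 1 : ℕ) : ℝ) / m = - (1 / m) := by push_cast; field_simp; ring
        rw [this, abs_neg, abs_of_pos (by positivity)]
        rw [div_lt_iff₀ hc] at hm
        rw [div_mul_eq_mul_div, div_lt_iff₀ hm0]; linarith
  have := ind m le_rfl
  rwa [div_self hm0.ne'] at this


/-- Sequences indexed by multi-indices with values in `κ → ℝ`. -/
abbrev HRSeq (n : ℕ) (κ : Type) := (Fin n → ℕ) → κ → ℝ

/-- lowering operator -/
noncomputable def hrLo {n : ℕ} (κ : Type) (i : Fin n) : Module.End ℝ (HRSeq n κ) where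
  toFun u a := Real.sqrt (a i + 1) • u (Function.update a i (a i + 1))
  map_add' u v := by funext a; simp
  map_smul' r u := by funext a k; simp; ring

/-- raising operator -/
noncomputable def hrHi {n : ℕ} (κ : Type) (i : Fin n) : Module.End ℝ (HRSeq n κ) where
  toFun u a := Real.sqrt (a i) • u (Function.update a i (a i - 1))
  map_add' u v := by funext a; simp
  map_smul' r u := by funext a k; simp; ring

/-- number operator -/
noncomputable def hrNum {n : ℕ} (κ : Type) (i : Fin n) : Module.End ℝ (HRSeq n κ) where
  toFun u a := (a i : ℝ) • u a
  map_add' u v := by funext a; simp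
  map_smul' r u := by funext a k; simp; ring

/-- pointwise matrix action -/
noncomputable def hrMat (n : ℕ) {κ : Type} [Fintype κ] [DecidableEq κ] :
    Matrix κ κ ℝ →ₐ[ℝ] Module.End ℝ (HRSeq n κ) :=
  AlgHom.ofLinearMap
    { toFun := fun B =>
        { toFun := fun u a => B *ᵥ u a
          map_add' := fun u v => by funext a; simp [Matrix.mulVec_add]
          map_smul' := fun r u => by funext a; simp [Matrix.mulVec_smul] }
      map_add' := fun B C => by ext1 u; funext a; simp [Matrix.add_mulVec]
      map_smul' := fun r B => by ext1 u; funext a; simp [Matrix.smul_mulVec] }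
    (by ext1 u; funext a; simp)
    (fun B C => by ext1 u; funext a; simp)

section
variable {n : ℕ} {κ : Type}

theorem hrLo_apply (i : Fin n) (u : HRSeq n κ) (a) :
    hrLo κ i u a = Real.sqrt (a i + 1) • u (Function.update a i (a i + 1)) := rfl
theorem hrHi_apply (i : Fin n) (u : HRSeq n κ) (a) :
    hrHi κ i u a = Real.sqrt (a i) • u (Function.update a i (a i - 1)) := rfl
theorem hrNum_apply (i : Fin n) (u : HRSeq n κ) (a) :
    hrNum κ i u a = (a i : ℝ) • u a := rfl
theorem hrMat_apply [Fintype κ] [DecidableEq κ] (B : Matrix κ κ ℝ) (u : HRSeq n κ) (a) :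
    hrMat n B u a = B *ᵥ u a := rfl

theorem hrLo_comm (i j : Fin n) : hrLo κ i * hrLo κ j = hrLo κ j * hrLo κ i := by
  rcases eq_or_ne i j with rfl | h
  · rfl
  · ext1 u; funext a
    simp only [Module.End.mul_apply, hrLo_apply, Function.update_of_ne h, Function.update_of_ne h.symm]
    rw [Function.update_comm h, smul_comm]

theorem hrHi_comm (i j : Fin n) : hrHi κ i * hrHi κ j = hrHi κ j * hrHi κ i := by
  rcases eq_or_ne i j with rfl | h
  · rfl
  · ext1 u; funext a
    simp only [Module.End.mul_apply, hrHi_apply, Function.update_of_ne h, Function.update_of_ne h.symm]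
    rw [Function.update_comm h, smul_comm]

theorem hrLoHi_comm {i j : Fin n} (h : i ≠ j) : hrLo κ i * hrHi κ j = hrHi κ j * hrLo κ i := by
  ext1 u; funext a
  simp only [Module.End.mul_apply, hrHi_apply, hrLo_apply, Function.update_of_ne h,
    Function.update_of_ne h.symm]
  rw [Function.update_comm h, smul_comm]

theorem hrLoHi (i : Fin n) : hrLo κ i * hrHi κ i = hrNum κ i + 1 := by
  ext1 u; funext a
  simp only [Module.End.mul_apply, hrHi_apply, hrLo_apply, LinearMap.add_apply, Pi.add_apply,
    hrNum_apply, Module.End.one_apply, Function.update_self, Function.update_idem, smul_smul]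
  have : (0:ℝ) ≤ (a i : ℝ) + 1 := by positivity
  push_cast
  rw [Real.mul_self_sqrt this, Function.update_eq_self, add_smul, one_smul]

theorem hrHiLo (i : Fin n) : hrHi κ i * hrLo κ i = hrNum κ i := by
  ext1 u; funext a
  simp only [Module.End.mul_apply, hrHi_apply, hrLo_apply,
    hrNum_apply, Function.update_self, Function.update_idem, smul_smul]
  rcases Nat.eq_zero_or_pos (a i) with h | h
  · simp [h]
  · rw [Nat.sub_add_cancel h, Function.update_eq_self]
    have h2 : ((a i - 1 : ℕ) : ℝ) + 1 = a i := by
      rw [Nat.cast_sub h]; simp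
    rw [h2, Real.mul_self_sqrt (by positivity)]

variable [Fintype κ] [DecidableEq κ]

theorem hrMat_lo (B : Matrix κ κ ℝ) (i : Fin n) : hrMat n B * hrLo κ i = hrLo κ i * hrMat n B := by
  ext1 u; funext a
  simp only [Module.End.mul_apply, hrLo_apply, hrMat_apply, Matrix.mulVec_smul]

theorem hrMat_hi (B : Matrix κ κ ℝ) (i : Fin n) : hrMat n B * hrHi κ i = hrHi κ i * hrMat n B := by
  ext1 u; funext a
  simp only [Module.End.mul_apply, hrHi_apply, hrMat_apply, Matrix.mulVec_smul]

/-- the Dirac type operator -/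
noncomputable def hrD (α e : Fin n → Matrix κ κ ℝ) : Module.End ℝ (HRSeq n κ) :=
  ∑ i, (hrMat n (α i + e i) * hrLo κ i + hrMat n (α i - e i) * hrHi κ i)

/-- finitely supported sequences -/
def HRFin (n : ℕ) (κ : Type) : Submodule ℝ (HRSeq n κ) where
  carrier := {u | (Function.support u).Finite}
  add_mem' := fun ha hb => (ha.union hb).subset (Function.support_add _ _)
  zero_mem' := by simp
  smul_mem' := fun c u hu => hu.subset (Function.support_const_smul_subset c u)

theorem hrLo_fin (i : Fin n) {u : HRSeq n κ} (hu : u ∈ HRFin n κ) : hrLo κ i u ∈ HRFin n κ := by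
  have : Function.Injective (fun a : Fin n → ℕ => Function.update a i (a i + 1)) := by
    intro a b h
    funext j
    rcases eq_or_ne j i with rfl | hj
    · have := congrFun h j; simpa using this
    · have := congrFun h j; simpa [hj] using this
  refine (Set.Finite.preimage this.injOn hu).subset ?_
  intro a ha
  simp only [Function.mem_support, hrLo_apply] at ha
  simp only [Set.mem_preimage, Function.mem_support]
  intro h; rw [h] at ha; simp at ha

theorem hrHi_fin (i : Fin n) {u : HRSeq n κ} (hu : u ∈ HRFin n κ) : hrHi κ i u ∈ HRFin n κ := by
  refine (Set.Finite.image (fun a : Fin n → ℕ => Function.update a i (a i + 1)) hu).subset ?_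
  intro a ha
  simp only [Function.mem_support, hrHi_apply] at ha
  have h0 : a i ≠ 0 := by
    intro h; rw [h] at ha; simp at ha
  refine ⟨Function.update a i (a i - 1), ?_, ?_⟩
  · simp only [Function.mem_support]
    intro h; rw [h] at ha; simp at ha
  · simp [Nat.sub_add_cancel (Nat.pos_of_ne_zero h0)]

theorem hrMat_fin (B : Matrix κ κ ℝ) {u : HRSeq n κ} (hu : u ∈ HRFin n κ) :
    hrMat n B u ∈ HRFin n κ := by
  refine Set.Finite.subset hu ?_
  intro a ha
  simp only [Function.mem_support, hrMat_apply] at ha ⊢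
  intro h; rw [h] at ha; simp at ha

theorem hrD_fin (α e : Fin n → Matrix κ κ ℝ) {u : HRSeq n κ} (hu : u ∈ HRFin n κ) :
    hrD α e u ∈ HRFin n κ := by
  simp only [hrD, LinearMap.sum_apply, LinearMap.add_apply, Module.End.mul_apply]
  exact Submodule.sum_mem _ fun i _ => Submodule.add_mem _ (hrMat_fin _ (hrLo_fin _ hu))
    (hrMat_fin _ (hrHi_fin _ hu))

/-- pairing -/
noncomputable def hrPair (y v : HRSeq n κ) : ℝ := ∑' a, y a ⬝ᵥ v a

theorem hrPair_summable (y : HRSeq n κ) {v : HRSeq n κ} (hv : v ∈ HRFin n κ) :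
    Summable fun a => y a ⬝ᵥ v a := by
  refine summable_of_hasFiniteSupport (Set.Finite.subset hv ?_)
  intro a ha
  simp only [Function.mem_support] at ha ⊢
  intro h; rw [h] at ha; simp at ha

theorem hrPair_add_right (y : HRSeq n κ) {v w : HRSeq n κ} (hv : v ∈ HRFin n κ) (hw : w ∈ HRFin n κ) :
    hrPair y (v + w) = hrPair y v + hrPair y w := by
  unfold hrPair
  rw [← (hrPair_summable y hv).tsum_add (hrPair_summable y hw)]
  simp [dotProduct_add]

theorem hrPair_add_left (y z : HRSeq n κ) {v : HRSeq n κ} (hv : v ∈ HRFin n κ) :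
    hrPair (y + z) v = hrPair y v + hrPair z v := by
  unfold hrPair
  rw [← (hrPair_summable y hv).tsum_add (hrPair_summable z hv)]
  simp [add_dotProduct]

theorem hrPair_smul_right (r : ℝ) (y v : HRSeq n κ) : hrPair y (r • v) = r * hrPair y v := by
  unfold hrPair
  rw [← tsum_mul_left]; simp

theorem hrPair_smul_left (r : ℝ) (y v : HRSeq n κ) : hrPair (r • y) v = r * hrPair y v := by
  unfold hrPair
  rw [← tsum_mul_left]; simp

theorem hrPair_comm (y v : HRSeq n κ) : hrPair y v = hrPair v y := by
  unfold hrPair; simp [dotProduct_comm]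

theorem hrPair_nonneg (v : HRSeq n κ) : 0 ≤ hrPair v v :=
  tsum_nonneg fun a => by
    simp only [dotProduct]; exact Finset.sum_nonneg fun i _ => mul_self_nonneg _

theorem hrPair_sum_right {ι : Type} (s : Finset ι) (y : HRSeq n κ) (v : ι → HRSeq n κ)
    (hv : ∀ i, v i ∈ HRFin n κ) : hrPair y (∑ i ∈ s, v i) = ∑ i ∈ s, hrPair y (v i) := by
  classical
  induction s using Finset.induction_on with
  | empty => simp [hrPair]
  | insert a s ha ih =>
    rw [Finset.sum_insert ha, Finset.sum_insert ha, hrPair_add_right _ (hv a)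
      (Submodule.sum_mem _ fun i _ => hv i), ih]

theorem hrPair_sum_left {ι : Type} (s : Finset ι) (y : ι → HRSeq n κ) {v : HRSeq n κ}
    (hv : v ∈ HRFin n κ) : hrPair (∑ i ∈ s, y i) v = ∑ i ∈ s, hrPair (y i) v := by
  classical
  induction s using Finset.induction_on with
  | empty => simp [hrPair]
  | insert a s ha ih =>
    rw [Finset.sum_insert ha, Finset.sum_insert ha, hrPair_add_left _ _ hv, ih]

theorem hrPair_lo (i : Fin n) (y v : HRSeq n κ) :
    hrPair y (hrLo κ i v) = hrPair (hrHi κ i y) v := by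
  have hinj : Function.Injective (fun a : Fin n → ℕ => Function.update a i (a i + 1)) := by
    intro a b h
    funext j
    rcases eq_or_ne j i with rfl | hj
    · have := congrFun h j; simpa using this
    · have := congrFun h j; simpa [hj] using this
  unfold hrPair
  rw [← hinj.tsum_eq (f := fun a => hrHi κ i y a ⬝ᵥ v a)]
  · congr 1; funext a
    simp only [hrHi_apply, hrLo_apply, Function.update_self, Function.update_idem, Nat.add_sub_cancel,
      Function.update_eq_self, dotProduct_smul, smul_dotProduct]
    push_cast; rfl
  · intro a ha
    simp only [Function.mem_support, hrHi_apply] at ha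
    have h0 : a i ≠ 0 := by
      intro h; rw [h] at ha; simp at ha
    exact ⟨Function.update a i (a i - 1), by simp [Nat.sub_add_cancel (Nat.pos_of_ne_zero h0)]⟩

theorem hrPair_hi (i : Fin n) (y v : HRSeq n κ) :
    hrPair y (hrHi κ i v) = hrPair (hrLo κ i y) v := by
  rw [hrPair_comm, ← hrPair_lo, hrPair_comm]

theorem hrPair_mat (B : Matrix κ κ ℝ) (y v : HRSeq n κ) :
    hrPair y (hrMat n B v) = hrPair (hrMat n Bᵀ y) v := by
  unfold hrPair
  congr 1; funext a
  rw [hrMat_apply, hrMat_apply, Matrix.dotProduct_mulVec, ← Matrix.mulVec_transpose]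

theorem hrPair_D (α e : Fin n → Matrix κ κ ℝ) (η : ℝ) (hα : ∀ i, (α i)ᵀ = η • α i)
    (he : ∀ i, (e i)ᵀ = -(η • e i)) (y : HRSeq n κ) {v : HRSeq n κ} (hv : v ∈ HRFin n κ) :
    hrPair y (hrD α e v) = η * hrPair (hrD α e y) v := by
  simp only [hrD, LinearMap.sum_apply, LinearMap.add_apply, Module.End.mul_apply]
  rw [hrPair_sum_right _ _ _ (fun i => Submodule.add_mem _ (hrMat_fin _ (hrLo_fin _ hv))
    (hrMat_fin _ (hrHi_fin _ hv))), hrPair_sum_left _ _ hv, Finset.mul_sum]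
  refine Finset.sum_congr rfl fun i _ => ?_
  rw [hrPair_add_right _ (hrMat_fin _ (hrLo_fin _ hv)) (hrMat_fin _ (hrHi_fin _ hv)),
    hrPair_add_left _ _ hv, hrPair_mat, hrPair_mat, hrPair_lo, hrPair_hi]
  have e1 : (α i + e i)ᵀ = η • (α i - e i) := by
    rw [transpose_add, hα, he, smul_sub, sub_eq_add_neg]
  have e2 : (α i - e i)ᵀ = η • (α i + e i) := by
    rw [transpose_sub, hα, he, smul_add, sub_neg_eq_add]
  have f1 : hrHi κ i (hrMat n (α i - e i) y) = hrMat n (α i - e i) (hrHi κ i y) :=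
    (LinearMap.congr_fun (hrMat_hi (α i - e i) i) y).symm
  have f2 : hrLo κ i (hrMat n (α i + e i) y) = hrMat n (α i + e i) (hrLo κ i y) :=
    (LinearMap.congr_fun (hrMat_lo (α i + e i) i) y).symm
  rw [e1, e2, map_smul, map_smul, LinearMap.smul_apply, LinearMap.smul_apply, map_smul, map_smul,
    f1, f2, hrPair_smul_left, hrPair_smul_left]
  ring

end


theorem hr_jacobi (M : ℕ) : ∃ (O : ℕ → Fin M → ℝ) (l : Fin M → ℝ),
    (∀ a b, a < M → b < M → ∑ J, O a J * O b J = if a = b then 1 else 0) ∧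
    (∀ m, m + 1 < M → ∀ J,
      Real.sqrt (m + 1) * O (m + 1) J + Real.sqrt m * O (m - 1) J = l J * O m J) := by
  classical
  let X : Matrix (Fin M) (Fin M) ℝ := fun a b =>
    (if (b : ℕ) = a + 1 then Real.sqrt ((a:ℕ) + 1) else 0) +
    (if (a : ℕ) = b + 1 then Real.sqrt ((b:ℕ) + 1) else 0)
  have hX : X.IsHermitian := by
    ext a b
    show X b a = X a b
    exact add_comm _ _
  let U : Matrix (Fin M) (Fin M) ℝ := (hX.eigenvectorUnitary : Matrix (Fin M) (Fin M) ℝ)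
  have hU1 : U * Uᵀ = 1 := by
    have := Matrix.mem_unitaryGroup_iff.1 hX.eigenvectorUnitary.2
    simpa [star_eq_conjTranspose] using this
  have hXU : ∀ a J, ∑ b, X a b * U b J = hX.eigenvalues J * U a J := by
    intro a J
    have := congrFun (hX.mulVec_eigenvectorBasis J) a
    simpa [Matrix.mulVec, dotProduct, U, Matrix.IsHermitian.eigenvectorUnitary_apply] using this
  refine ⟨fun m J => if h : m < M then U ⟨m, h⟩ J else 0, hX.eigenvalues, ?_, ?_⟩
  · intro a b ha hb
    have := congrFun (congrFun hU1 ⟨a, ha⟩) ⟨b, hb⟩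
    simp only [Matrix.mul_apply, transpose_apply, Matrix.one_apply, Fin.mk.injEq] at this
    simpa [ha, hb] using this
  · intro m hm J
    have h := hXU ⟨m, by omega⟩ J
    have hm' : m < M := by omega
    have hm'' : m - 1 < M := by omega
    simp only [hm, hm', hm'', dif_pos]
    rw [← h]
    simp only [X, add_mul, Finset.sum_add_distrib]
    congr 1
    · rw [Finset.sum_eq_single ⟨m+1, hm⟩]
      · simp
      · intro b _ hb
        have : ¬ ((b:ℕ) = m + 1) := fun h => hb (Fin.ext h)
        simp [this]
      · simp
    · rcases Nat.eq_zero_or_pos m with h0 | h0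
      · subst h0
        simp
      · rw [Finset.sum_eq_single ⟨m-1, hm''⟩]
        · have : m = m - 1 + 1 := by omega
          have h2 : ((m - 1 : ℕ) : ℝ) + 1 = m := by
            rw [Nat.cast_sub h0]; simp
          rw [if_pos this]; simp only [h2]
        · intro b _ hb
          have : ¬ (m = (b:ℕ) + 1) := fun h => hb (Fin.ext (by simp; omega))
          simp [this]
        · simp

section
variable {n : ℕ} {κ : Type} [Fintype κ] [DecidableEq κ]

/-- sequences supported in a box -/
def HRBox (n : ℕ) (κ : Type) (M : ℕ) (u : HRSeq n κ) : Prop := ∀ a, u a ≠ 0 → ∀ i, a i < M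

theorem hr_exists_box {u : HRSeq n κ} (hu : u ∈ HRFin n κ) : ∃ M, HRBox n κ M u := by
  have hu' : (Function.support u).Finite := hu
  refine ⟨∑ a ∈ hu'.toFinset, ∑ i, (a i + 1), fun a ha i => ?_⟩
  have h1 : a ∈ hu'.toFinset := by simpa using ha
  calc a i < a i + 1 := by omega
    _ ≤ ∑ i, (a i + 1) := Finset.single_le_sum (f := fun i => a i + 1) (fun _ _ => by omega) (Finset.mem_univ i)
    _ ≤ _ := Finset.single_le_sum (f := fun a : Fin n → ℕ => ∑ i, (a i + 1)) (fun _ _ => by positivity) h1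

theorem hrPair_box {M : ℕ} {v : HRSeq n κ} (hv : HRBox n κ M v) (y : HRSeq n κ) :
    hrPair y v = ∑ a : Fin n → Fin M, y (fun i => a i) ⬝ᵥ v (fun i => a i) := by
  unfold hrPair
  have hinj : Function.Injective (fun (a : Fin n → Fin M) (i : Fin n) => (a i : ℕ)) := by
    intro a b h; funext i; exact Fin.ext (congrFun h i)
  rw [← hinj.tsum_eq (f := fun a => y a ⬝ᵥ v a), tsum_fintype]
  intro a ha
  have : v a ≠ 0 := by
    intro h; simp [h] at ha
  exact ⟨fun i => ⟨a i, hv a this i⟩, rfl⟩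

/-- the position operator -/
noncomputable def hrX (κ : Type) (i : Fin n) : Module.End ℝ (HRSeq n κ) := hrLo κ i + hrHi κ i

theorem hrX_fin (i : Fin n) {u : HRSeq n κ} (hu : u ∈ HRFin n κ) : hrX κ i u ∈ HRFin n κ :=
  Submodule.add_mem _ (hrLo_fin i hu) (hrHi_fin i hu)

theorem hrX_box {M : ℕ} (i : Fin n) {u : HRSeq n κ} (hu : HRBox n κ M u) :
    HRBox n κ (M + 1) (hrX κ i u) := by
  intro a ha j
  by_contra hcon
  apply ha
  have h1 : u (Function.update a i (a i + 1)) = 0 := by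
    by_contra h
    have := hu _ h j
    rcases eq_or_ne j i with rfl | hj
    · simp at this; omega
    · simp [hj] at this; omega
  have h2 : u (Function.update a i (a i - 1)) = 0 := by
    by_contra h
    have := hu _ h j
    rcases eq_or_ne j i with rfl | hj
    · simp at this; omega
    · simp [hj] at this; omega
  simp [hrX, hrLo_apply, hrHi_apply, h1, h2]

theorem hrPair_X (i : Fin n) (y : HRSeq n κ) {v : HRSeq n κ} (hv : v ∈ HRFin n κ) :
    hrPair y (hrX κ i v) = hrPair (hrX κ i y) v := by
  rw [hrX, LinearMap.add_apply, LinearMap.add_apply, hrPair_add_right _ (hrLo_fin i hv) (hrHi_fin i hv),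
    hrPair_add_left _ _ hv, hrPair_lo, hrPair_hi, add_comm]

/-- product eigenfunctions -/
noncomputable def hrPhi {M : ℕ} (O : ℕ → Fin M → ℝ) (J : Fin n → Fin M) (k : κ) : HRSeq n κ :=
  fun a => (∏ i, O (a i) (J i)) • Pi.single k (1:ℝ)

theorem hrPair_phi {M : ℕ} (O : ℕ → Fin M → ℝ) (J : Fin n → Fin M) (k : κ) {M' : ℕ}
    {v : HRSeq n κ} (hv : HRBox n κ M' v) :
    hrPair (hrPhi O J k) v = ∑ a : Fin n → Fin M', (∏ i, O (a i) (J i)) * v (fun i => a i) k := by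
  rw [hrPair_box hv]
  refine Finset.sum_congr rfl fun a _ => ?_
  simp [hrPhi]

theorem hr_parseval {M : ℕ} (O : ℕ → Fin M → ℝ)
    (hO : ∀ a b, a < M → b < M → ∑ J, O a J * O b J = if a = b then 1 else 0)
    {v : HRSeq n κ} (hv : HRBox n κ M v) :
    hrPair v v = ∑ J : Fin n → Fin M, ∑ k, hrPair (hrPhi O J k) v ^ 2 := by
  have key : ∀ a b : Fin n → Fin M, ∑ J : Fin n → Fin M, (∏ i, O (a i) (J i)) * ∏ i, O (b i) (J i)
      = if a = b then 1 else 0 := by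
    intro a b
    simp only [← Finset.prod_mul_distrib]
    have := Finset.prod_univ_sum (fun _ : Fin n => (Finset.univ : Finset (Fin M)))
      (fun i J => O (a i) J * O (b i) J)
    rw [Fintype.piFinset_univ] at this
    rw [← this]
    simp only [fun i => hO (a i) (b i) (a i).2 (b i).2]
    split_ifs with h
    · subst h; simp
    · obtain ⟨i, hi⟩ := Function.ne_iff.1 h
      exact Finset.prod_eq_zero (Finset.mem_univ i) (by rw [if_neg]; exact fun h => hi (Fin.ext h))
  rw [hrPair_box hv]
  simp only [fun J k => hrPair_phi O J k hv]
  rw [Finset.sum_comm]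
  simp only [dotProduct]
  rw [Finset.sum_comm]
  refine Finset.sum_congr rfl fun k _ => ?_
  simp only [sq, Finset.sum_mul_sum]
  rw [Finset.sum_comm]
  refine Finset.sum_congr rfl fun a _ => ?_
  rw [Finset.sum_comm]
  rw [Finset.sum_eq_single a]
  · have h1 := key a a
    rw [if_pos rfl] at h1
    calc _ = (∑ J : Fin n → Fin M, (∏ i, O (a i) (J i)) * ∏ i, O (a i) (J i)) *
          (v (fun i => a i) k * v (fun i => a i) k) := by rw [h1, one_mul]
      _ = _ := by rw [Finset.sum_mul]; exact Finset.sum_congr rfl fun J _ => by ring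
  · intro b _ hb
    have h1 := key a b
    rw [if_neg hb.symm] at h1
    calc _ = (∑ J : Fin n → Fin M, (∏ i, O (a i) (J i)) * ∏ i, O (b i) (J i)) *
          (v (fun i => a i) k * v (fun i => b i) k) := by
            rw [Finset.sum_mul]; exact Finset.sum_congr rfl fun J _ => by ring
      _ = _ := by rw [h1, zero_mul]
  · simp

theorem hrPhi_X {M : ℕ} (O : ℕ → Fin M → ℝ) (l : Fin M → ℝ)
    (hl : ∀ m, m + 1 < M → ∀ J,
      Real.sqrt (m + 1) * O (m + 1) J + Real.sqrt m * O (m - 1) J = l J * O m J)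
    (J : Fin n → Fin M) (k : κ) (i : Fin n) {u : HRSeq n κ} (hf : u ∈ HRFin n κ)
    (hu : ∀ a, u a ≠ 0 → ∀ i, a i + 1 < M) :
    hrPair (hrPhi O J k) (hrX κ i u) = l (J i) * hrPair (hrPhi O J k) u := by
  rw [hrPair_X _ _ hf, ← hrPair_smul_left]
  unfold hrPair
  congr 1; funext a
  by_cases h : u a = 0
  · simp [h]
  congr 1
  have hp : ∀ m, ∏ j, O (Function.update a i m j) (J j) =
      O m (J i) * ∏ j ∈ Finset.univ.erase i, O (a j) (J j) := by
    intro m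
    rw [← Finset.mul_prod_erase _ _ (Finset.mem_univ i), Function.update_self]
    congr 1
    refine Finset.prod_congr rfl fun j hj => ?_
    rw [Function.update_of_ne (Finset.ne_of_mem_erase hj)]
  have h0 := hp (a i)
  rw [Function.update_eq_self] at h0
  simp only [hrX, LinearMap.add_apply, Pi.add_apply, Pi.smul_apply, hrLo_apply, hrHi_apply, hrPhi, hp, h0, smul_smul]
  rw [← add_smul]
  congr 1
  have := hl (a i) (hu a h i) (J i)
  linear_combination (∏ j ∈ Finset.univ.erase i, O (a j) (J j)) * this

theorem hr_quad (α : Fin n → Matrix κ κ ℝ) (c : ℝ)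
    (hα : ∀ (v : Fin n → ℝ) (w : κ → ℝ), c * (∑ i, v i ^ 2) * (w ⬝ᵥ w) ≤
      ((∑ i, v i • α i) *ᵥ w) ⬝ᵥ ((∑ i, v i • α i) *ᵥ w))
    {u : HRSeq n κ} (hu : u ∈ HRFin n κ) :
    c * ∑ i, hrPair (hrX κ i u) (hrX κ i u) ≤
      hrPair (∑ i, hrMat n (α i) (hrX κ i u)) (∑ i, hrMat n (α i) (hrX κ i u)) := by
  obtain ⟨M, hM⟩ := hr_exists_box hu
  obtain ⟨O, l, hO, hl⟩ := hr_jacobi (M + 1)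
  have hbox : ∀ i, HRBox n κ (M+1) (hrX κ i u) := fun i => hrX_box i hM
  have hu' : ∀ a, u a ≠ 0 → ∀ i, a i + 1 < M + 1 := fun a ha i => by have := hM a ha i; omega
  have hbox2 : HRBox n κ (M+1) (∑ i, hrMat n (α i) (hrX κ i u)) := by
    intro a ha j
    by_contra hcon
    apply ha
    rw [Finset.sum_apply]
    refine Finset.sum_eq_zero fun i _ => ?_
    have : hrX κ i u a = 0 := by
      by_contra h
      exact hcon (hbox i a h j)
    rw [hrMat_apply, this, Matrix.mulVec_zero]
  rw [hr_parseval O hO hbox2]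
  simp only [fun i => hr_parseval O hO (hbox i)]
  rw [Finset.sum_comm, Finset.mul_sum]
  refine Finset.sum_le_sum fun J _ => ?_
  let w : κ → ℝ := fun k => hrPair (hrPhi O J k) u
  have h1 : ∀ i k, hrPair (hrPhi O J k) (hrX κ i u) = l (J i) * w k := fun i k =>
    hrPhi_X O l hl J k i hu hu'
  have h2 : ∀ k, hrPair (hrPhi O J k) (∑ i, hrMat n (α i) (hrX κ i u)) =
      ((∑ i, l (J i) • α i) *ᵥ w) k := by
    intro k
    rw [hrPair_sum_right _ _ _ (fun i => hrMat_fin _ (hrX_fin i hu)), Matrix.sum_mulVec, Finset.sum_apply]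
    refine Finset.sum_congr rfl fun i _ => ?_
    rw [Matrix.smul_mulVec, Pi.smul_apply, smul_eq_mul, Matrix.mulVec, dotProduct, Finset.mul_sum]
    rw [hrPair_mat]
    have : hrMat n (α i)ᵀ (hrPhi O J k) = ∑ k', α i k k' • hrPhi O J k' := by
      funext a
      rw [hrMat_apply, Finset.sum_apply]
      simp only [hrPhi, Pi.smul_apply, Matrix.mulVec_smul]
      funext k''
      simp [Finset.sum_apply, Pi.single_apply, mul_comm]
    rw [this, hrPair_sum_left _ _ (hrX_fin i hu)]
    refine Finset.sum_congr rfl fun k' _ => ?_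
    rw [hrPair_smul_left, h1]; ring
  simp only [h1, h2]
  have := hα (fun i => l (J i)) w
  refine le_trans (le_of_eq ?_) (this.trans (le_of_eq ?_))
  · simp only [dotProduct, mul_pow, ← Finset.mul_sum]
    rw [← Finset.sum_mul]
    simp only [sq]; ring
  · simp only [dotProduct, sq]

end


theorem hr_sq_sum {R : Type} [Ring R] [Algebra ℝ R] {n : ℕ} (E P : Fin n → R) (r : ℝ)
    (hEP : ∀ i j, P i * E j = E j * P i) (hP : ∀ i j, P i * P j = P j * P i)
    (hE : ∀ i j, E i * E j + E j * E i = if i = j then (2 * r) • 1 else 0) :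
    (∑ i, E i * P i) * (∑ i, E i * P i) = r • ∑ i, P i * P i := by
  have h1 : (∑ i, E i * P i) * (∑ i, E i * P i) = ∑ i, ∑ j, E i * E j * (P i * P j) := by
    rw [Finset.sum_mul_sum]
    refine Finset.sum_congr rfl fun i _ => Finset.sum_congr rfl fun j _ => ?_
    rw [mul_assoc, ← mul_assoc (P i), hEP]; simp only [mul_assoc]
  have h2 : (∑ i, E i * P i) * (∑ i, E i * P i) = ∑ i, ∑ j, E j * E i * (P i * P j) := by
    rw [h1, Finset.sum_comm]
    refine Finset.sum_congr rfl fun i _ => Finset.sum_congr rfl fun j _ => ?_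
    rw [hP]
  have h3 : (2:ℝ) • ((∑ i, E i * P i) * (∑ i, E i * P i)) = (2:ℝ) • (r • ∑ i, P i * P i) := by
    rw [two_smul]
    nth_rewrite 1 [h1]
    rw [h2, ← Finset.sum_add_distrib, smul_smul, Finset.smul_sum]
    refine Finset.sum_congr rfl fun i _ => ?_
    rw [← Finset.sum_add_distrib]
    simp only [← add_mul, hE, ite_mul, zero_mul]
    simp
  exact smul_right_injective R (two_ne_zero : (2:ℝ) ≠ 0) h3

theorem hr_anti_sum {R : Type} [Ring R] [Algebra ℝ R] {n : ℕ} (A X E P : Fin n → R) (r : ℝ)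
    (hPA : ∀ i j, P i * A j = A j * P i) (hXE : ∀ i j, X i * E j = E j * X i)
    (hAE : ∀ i j, A i * E j = - (E j * A i))
    (hXP : ∀ i j, X i * P j - P j * X i = if i = j then r • 1 else 0) :
    (∑ i, A i * X i) * (∑ i, E i * P i) + (∑ i, E i * P i) * (∑ i, A i * X i) =
      r • ∑ i, A i * E i := by
  have h1 : (∑ i, A i * X i) * (∑ i, E i * P i) = ∑ i, ∑ j, A i * E j * (X i * P j) := by
    rw [Finset.sum_mul_sum]
    refine Finset.sum_congr rfl fun i _ => Finset.sum_congr rfl fun j _ => ?_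
    rw [mul_assoc, ← mul_assoc (X i), hXE]; simp only [mul_assoc]
  have h2 : (∑ i, E i * P i) * (∑ i, A i * X i) = ∑ i, ∑ j, -(A i * E j * (P j * X i)) := by
    rw [Finset.sum_mul_sum, Finset.sum_comm]
    refine Finset.sum_congr rfl fun i _ => Finset.sum_congr rfl fun j _ => ?_
    rw [mul_assoc, ← mul_assoc (P j), hPA, hAE]; simp only [mul_assoc, neg_mul, neg_neg]
  rw [h1, h2, ← Finset.sum_add_distrib, Finset.smul_sum]
  refine Finset.sum_congr rfl fun i _ => ?_
  rw [← Finset.sum_add_distrib]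
  simp only [← sub_eq_add_neg, ← mul_sub, hXP, mul_ite, mul_zero]
  simp

section
variable {n : ℕ} {κ : Type} [Fintype κ] [DecidableEq κ]

/-- the derivative operator -/
noncomputable def hrP (κ : Type) (i : Fin n) : Module.End ℝ (HRSeq n κ) := hrLo κ i - hrHi κ i

theorem hrP_fin (i : Fin n) {u : HRSeq n κ} (hu : u ∈ HRFin n κ) : hrP κ i u ∈ HRFin n κ :=
  Submodule.sub_mem _ (hrLo_fin i hu) (hrHi_fin i hu)

theorem hrPair_neg_left (y v : HRSeq n κ) : hrPair (-y) v = - hrPair y v := by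
  have := hrPair_smul_left (-1) y v
  simpa using this

theorem hrPair_P (i : Fin n) (y : HRSeq n κ) {v : HRSeq n κ} (hv : v ∈ HRFin n κ) :
    hrPair y (hrP κ i v) = - hrPair (hrP κ i y) v := by
  have e1 : hrP κ i v = hrLo κ i v + (-1:ℝ) • hrHi κ i v := by
    simp [hrP, sub_eq_add_neg]
  have e2 : hrP κ i y = hrLo κ i y + (-1:ℝ) • hrHi κ i y := by
    simp [hrP, sub_eq_add_neg]
  rw [e1, e2, hrPair_add_right _ (hrLo_fin i hv) (Submodule.smul_mem _ _ (hrHi_fin i hv)),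
    hrPair_add_left _ _ hv, hrPair_smul_left, hrPair_smul_right, hrPair_lo, hrPair_hi]
  ring

theorem hrD_eq (α e : Fin n → Matrix κ κ ℝ) :
    hrD α e = (∑ i, hrMat n (α i) * hrX κ i) + ∑ i, hrMat n (e i) * hrP κ i := by
  rw [hrD, ← Finset.sum_add_distrib]
  refine Finset.sum_congr rfl fun i _ => ?_
  rw [map_add, map_sub, hrX, hrP, add_mul, sub_mul, mul_add, mul_sub]
  abel

theorem hrMat_X (B : Matrix κ κ ℝ) (i : Fin n) : hrX κ i * hrMat n B = hrMat n B * hrX κ i := by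
  rw [hrX, add_mul, mul_add, hrMat_lo, hrMat_hi]
theorem hrMat_P (B : Matrix κ κ ℝ) (i : Fin n) : hrP κ i * hrMat n B = hrMat n B * hrP κ i := by
  rw [hrP, sub_mul, mul_sub, hrMat_lo, hrMat_hi]
theorem hrP_comm (i j : Fin n) : hrP κ i * hrP κ j = hrP κ j * hrP κ i := by
  rcases eq_or_ne i j with rfl | h
  · rfl
  · simp only [hrP, sub_mul, mul_sub]
    rw [hrLo_comm i j, hrHi_comm i j, hrLoHi_comm h, ← hrLoHi_comm h.symm]
    abel
theorem hrXP (i j : Fin n) : hrX κ i * hrP κ j - hrP κ j * hrX κ i =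
    if i = j then (-2:ℝ) • (1 : Module.End ℝ (HRSeq n κ)) else 0 := by
  split_ifs with h
  · subst h
    simp only [hrP, hrX, sub_mul, mul_sub, add_mul, mul_add, hrLoHi, hrHiLo]
    module
  · simp only [hrP, hrX, sub_mul, mul_sub, add_mul, mul_add]
    rw [hrLo_comm i j, hrHi_comm i j, hrLoHi_comm h, ← hrLoHi_comm (Ne.symm h)]
    abel
theorem hrXX_sub_PP (i : Fin n) : hrX κ i * hrX κ i - hrP κ i * hrP κ i =
    (4:ℝ) • hrNum κ i + (2:ℝ) • (1 : Module.End ℝ (HRSeq n κ)) := by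
  simp only [hrP, hrX, sub_mul, mul_sub, add_mul, mul_add, hrLoHi, hrHiLo]
  module

/-- graph norm squared -/
noncomputable def hrS2 (u : HRSeq n κ) : ℝ :=
  ∑ i, (hrPair (hrX κ i u) (hrX κ i u) + hrPair (hrP κ i u) (hrP κ i u))

theorem hrS2_nonneg (u : HRSeq n κ) : 0 ≤ hrS2 u :=
  Finset.sum_nonneg fun _ _ => add_nonneg (hrPair_nonneg _) (hrPair_nonneg _)

theorem hrNum_fin (i : Fin n) {u : HRSeq n κ} (hu : u ∈ HRFin n κ) : hrNum κ i u ∈ HRFin n κ := by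
  rw [← hrHiLo]; exact hrHi_fin _ (hrLo_fin _ hu)

theorem hrPair_mono {y v z w : HRSeq n κ} (hv : v ∈ HRFin n κ) (hw : w ∈ HRFin n κ)
    (h : ∀ a, y a ⬝ᵥ v a ≤ z a ⬝ᵥ w a) : hrPair y v ≤ hrPair z w :=
  (hrPair_summable y hv).tsum_le_tsum h (hrPair_summable z hw)

theorem hrS2_lower (d : ℕ) {u : HRSeq n κ} (hu : u ∈ HRFin n κ)
    (hd : ∀ a, u a ≠ 0 → d ≤ ∑ i, a i) : 4 * d * hrPair u u ≤ hrS2 u := by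
  have h1 : hrS2 u = ∑ i, (4 * hrPair (hrNum κ i u) u + 2 * hrPair u u) := by
    refine Finset.sum_congr rfl fun i _ => ?_
    rw [hrPair_X _ _ hu, hrPair_P _ _ hu]
    have := LinearMap.congr_fun (hrXX_sub_PP (κ := κ) i) u
    simp only [LinearMap.sub_apply, Module.End.mul_apply, LinearMap.add_apply, LinearMap.smul_apply,
      Module.End.one_apply] at this
    rw [← sub_eq_add_neg, ← hrPair_smul_left, ← hrPair_smul_left, ← hrPair_add_left _ _ hu, ← this,
      sub_eq_add_neg (hrX κ i (hrX κ i u)), hrPair_add_left _ _ hu, hrPair_neg_left, sub_eq_add_neg]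
  have h2 : (d:ℝ) * hrPair u u ≤ ∑ i, hrPair (hrNum κ i u) u := by
    rw [← hrPair_sum_left _ _ hu, ← hrPair_smul_left]
    refine hrPair_mono hu hu fun a => ?_
    by_cases ha : u a = 0
    · simp [ha]
    · have : (d:ℝ) ≤ ∑ i, (a i : ℝ) := by exact_mod_cast hd a ha
      simp only [Finset.sum_apply, hrNum_apply, Pi.smul_apply, smul_dotProduct, ← Finset.sum_smul, smul_eq_mul]
      refine mul_le_mul_of_nonneg_right this ?_
      simp only [dotProduct]; exact Finset.sum_nonneg fun i _ => mul_self_nonneg _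
  rw [h1, Finset.sum_add_distrib, ← Finset.mul_sum]
  have h3 : 0 ≤ ∑ i : Fin n, 2 * hrPair u u :=
    Finset.sum_nonneg fun _ _ => mul_nonneg (by norm_num) (hrPair_nonneg _)
  linarith

theorem hr_mat_bound (B : Matrix κ κ ℝ) : ∃ C : ℝ, 0 ≤ C ∧ ∀ w : κ → ℝ,
    (B *ᵥ w) ⬝ᵥ (B *ᵥ w) ≤ C * (w ⬝ᵥ w) := by
  refine ⟨∑ i, ∑ j, B i j ^ 2, by positivity, fun w => ?_⟩
  simp only [dotProduct, Matrix.mulVec]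
  rw [Finset.sum_mul]
  refine Finset.sum_le_sum fun i _ => ?_
  have := Finset.sum_mul_sq_le_sq_mul_sq Finset.univ (fun j => B i j) w
  simpa [sq] using this

theorem hr_mat_bound' (B : Matrix κ κ ℝ) : ∃ C : ℝ, 0 ≤ C ∧ ∀ u : HRSeq n κ, u ∈ HRFin n κ →
    hrPair (hrMat n B u) (hrMat n B u) ≤ C * hrPair u u := by
  obtain ⟨C, hC, h⟩ := hr_mat_bound B
  refine ⟨C, hC, fun u hu => ?_⟩
  rw [← hrPair_smul_left]
  refine hrPair_mono (hrMat_fin _ hu) hu fun a => ?_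
  rw [hrMat_apply, Pi.smul_apply, smul_dotProduct]; exact h (u a)

theorem hr_mat_bound2 (B : Matrix κ κ ℝ) : ∃ C : ℝ, 0 ≤ C ∧ ∀ u : HRSeq n κ, u ∈ HRFin n κ →
    |hrPair (hrMat n B u) u| ≤ C * hrPair u u := by
  obtain ⟨C, hC, h⟩ := hr_mat_bound B
  have key : ∀ w : κ → ℝ, |(B *ᵥ w) ⬝ᵥ w| ≤ (C + 1) * (w ⬝ᵥ w) := by
    intro w
    have h1 : 0 ≤ (B *ᵥ w + w) ⬝ᵥ (B *ᵥ w + w) := by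
      simp only [dotProduct]; exact Finset.sum_nonneg fun i _ => mul_self_nonneg _
    have h2 : 0 ≤ (B *ᵥ w - w) ⬝ᵥ (B *ᵥ w - w) := by
      simp only [dotProduct]; exact Finset.sum_nonneg fun i _ => mul_self_nonneg _
    have h3 : 0 ≤ w ⬝ᵥ w := by
      simp only [dotProduct]; exact Finset.sum_nonneg fun i _ => mul_self_nonneg _
    simp only [add_dotProduct, dotProduct_add, sub_dotProduct, dotProduct_sub] at h1 h2
    rw [dotProduct_comm w] at h1 h2
    have := h w
    have h4 : 0 ≤ C * (w ⬝ᵥ w) := mul_nonneg hC h3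
    rw [abs_le]; constructor <;> linarith
  refine ⟨C + 1, by linarith, fun u hu => ?_⟩
  rw [abs_le, ← neg_mul, ← hrPair_smul_left, ← hrPair_smul_left]
  constructor
  · refine hrPair_mono hu hu fun a => ?_
    have := (abs_le.1 (key (u a))).1
    rw [hrMat_apply, Pi.smul_apply, smul_dotProduct, smul_eq_mul]; linarith
  · refine hrPair_mono hu hu fun a => ?_
    have := (abs_le.1 (key (u a))).2
    rw [hrMat_apply, Pi.smul_apply, smul_dotProduct, smul_eq_mul]; linarith

theorem hr_garding (α e : Fin n → Matrix κ κ ℝ) (η : ℝ) (hη : η * η = 1)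
    (hα : ∀ i, (α i)ᵀ = η • α i) (he : ∀ i, (e i)ᵀ = -(η • e i))
    (hαe : ∀ i j, α i * e j = -(e j * α i))
    (hee : ∀ i j, e i * e j + e j * e i = if i = j then (2 * (-η)) • 1 else 0)
    (c C : ℝ) (hc1 : c ≤ 1)
    (hell : ∀ (v : Fin n → ℝ) (w : κ → ℝ), c * (∑ i, v i ^ 2) * (w ⬝ᵥ w) ≤
      ((∑ i, v i • α i) *ᵥ w) ⬝ᵥ ((∑ i, v i • α i) *ᵥ w))
    {u : HRSeq n κ} (hu : u ∈ HRFin n κ)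
    (hC : |hrPair (hrMat n (∑ i, α i * e i) u) u| ≤ C * hrPair u u) :
    c * hrS2 u - 2 * C * hrPair u u ≤ hrPair (hrD α e u) (hrD α e u) := by
  set A : Module.End ℝ (HRSeq n κ) := ∑ i, hrMat n (α i) * hrX κ i with hA
  set B : Module.End ℝ (HRSeq n κ) := ∑ i, hrMat n (e i) * hrP κ i with hB
  have hAu : A u ∈ HRFin n κ := by
    rw [hA, LinearMap.sum_apply]
    exact Submodule.sum_mem _ fun i _ => hrMat_fin _ (hrX_fin _ hu)
  have hBu : B u ∈ HRFin n κ := by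
    rw [hB, LinearMap.sum_apply]
    exact Submodule.sum_mem _ fun i _ => hrMat_fin _ (hrP_fin _ hu)
  have hAadj : ∀ y, hrPair y (A u) = η * hrPair (A y) u := by
    intro y
    rw [hA, LinearMap.sum_apply, LinearMap.sum_apply,
      hrPair_sum_right _ _ _ (fun i => by exact hrMat_fin _ (hrX_fin _ hu)), hrPair_sum_left _ _ hu, Finset.mul_sum]
    refine Finset.sum_congr rfl fun i _ => ?_
    rw [← hrMat_X, Module.End.mul_apply, hrPair_X _ _ (hrMat_fin _ hu), hrPair_mat, hα, map_smul, LinearMap.smul_apply,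
      hrPair_smul_left, Module.End.mul_apply, ← Module.End.mul_apply, ← Module.End.mul_apply, hrMat_X]
  have hBadj : ∀ y, hrPair y (B u) = η * hrPair (B y) u := by
    intro y
    rw [hB, LinearMap.sum_apply, LinearMap.sum_apply,
      hrPair_sum_right _ _ _ (fun i => by exact hrMat_fin _ (hrP_fin _ hu)), hrPair_sum_left _ _ hu, Finset.mul_sum]
    refine Finset.sum_congr rfl fun i _ => ?_
    rw [← hrMat_P, Module.End.mul_apply, hrPair_P _ _ (hrMat_fin _ hu), hrPair_mat, he, map_neg, map_smul, LinearMap.neg_apply, LinearMap.smul_apply,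
      hrPair_neg_left, hrPair_smul_left, neg_neg, ← Module.End.mul_apply, ← hrMat_P]
  have hBB : B * B = (-η) • ∑ i, hrP κ i * hrP κ i := by
    refine hr_sq_sum (fun i => hrMat n (e i)) (fun i => hrP κ i) (-η) (fun i j => hrMat_P _ _) hrP_comm ?_
    intro i j
    simp only [← map_mul, ← map_add, hee]
    split_ifs <;> simp
  have hAB : A * B + B * A = (-2:ℝ) • hrMat n (∑ i, α i * e i) := by
    have := hr_anti_sum (fun i => hrMat n (α i)) (fun i => hrX κ i) (fun i => hrMat n (e i))
      (fun i => hrP κ i) (-2) (fun i j => hrMat_P _ _) (fun i j => hrMat_X _ _)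
      (fun i j => by rw [← map_mul, ← map_mul, ← map_neg, hαe]) hrXP
    rw [hA, hB, this, map_sum]
    simp only [map_mul]
  have hD : hrD α e u = A u + B u := by rw [hrD_eq, LinearMap.add_apply]
  have e1 : hrPair (B u) (B u) = ∑ i, hrPair (hrP κ i u) (hrP κ i u) := by
    rw [hBadj, ← Module.End.mul_apply, hBB, LinearMap.smul_apply, hrPair_smul_left, LinearMap.sum_apply,
      hrPair_sum_left _ _ hu]
    simp only [fun i => hrPair_P i (hrP κ i u) hu, Finset.sum_neg_distrib, Module.End.mul_apply]
    linear_combination (-∑ i, hrPair (hrP κ i (hrP κ i u)) u) * hη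
  have e2 : hrPair (A u) (B u) + hrPair (B u) (A u) =
      η * (-2) * hrPair (hrMat n (∑ i, α i * e i) u) u := by
    rw [hAadj, hBadj, ← mul_add, ← hrPair_add_left _ _ hu, ← Module.End.mul_apply, ← Module.End.mul_apply,
      ← LinearMap.add_apply, add_comm, hAB, LinearMap.smul_apply, hrPair_smul_left]
    ring
  have e3 : c * ∑ i, hrPair (hrX κ i u) (hrX κ i u) ≤ hrPair (A u) (A u) := by
    have := hr_quad α c hell hu
    rw [hA, LinearMap.sum_apply]
    exact this
  have e4 : hrPair (hrD α e u) (hrD α e u) =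
      hrPair (A u) (A u) + (hrPair (A u) (B u) + hrPair (B u) (A u)) + hrPair (B u) (B u) := by
    rw [hD, hrPair_add_right _ hAu hBu, hrPair_add_left _ _ hAu, hrPair_add_left _ _ hBu]; ring
  have hη' : |η| = 1 := by
    have : |η| * |η| = 1 := by rw [← abs_mul, hη, abs_one]
    nlinarith [abs_nonneg η]
  have e5 : -(2 * C * hrPair u u) ≤ η * (-2) * hrPair (hrMat n (∑ i, α i * e i) u) u := by
    have : |η * (-2) * hrPair (hrMat n (∑ i, α i * e i) u) u| ≤ 2 * C * hrPair u u := by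
      rw [abs_mul, abs_mul, hη', abs_neg, abs_two]
      linarith
    exact (abs_le.1 this).1
  have e6 : c * ∑ i, hrPair (hrP κ i u) (hrP κ i u) ≤ ∑ i, hrPair (hrP κ i u) (hrP κ i u) := by
    have : 0 ≤ ∑ i, hrPair (hrP κ i u) (hrP κ i u) := Finset.sum_nonneg fun _ _ => hrPair_nonneg _
    nlinarith
  rw [e4, e1, e2, hrS2, Finset.sum_add_distrib]
  linarith

end

set_option linter.unusedVariables false

section
variable {n : ℕ} {κ : Type} [Fintype κ] [DecidableEq κ]

/-- the Hilbert space -/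
noncomputable abbrev HRH (n : ℕ) (κ : Type) [Fintype κ] := lp (fun _ : Fin n → ℕ => EuclideanSpace ℝ κ) 2

theorem hr_memlp_iff (y : (Fin n → ℕ) → EuclideanSpace ℝ κ) :
    Memℓp y 2 ↔ Summable fun a => (y a).ofLp ⬝ᵥ (y a).ofLp := by
  rw [memℓp_gen_iff (by norm_num)]
  refine iff_of_eq ?_
  congr 1; funext a
  have : ‖y a‖ ^ 2 = (y a).ofLp ⬝ᵥ (y a).ofLp := by
    rw [EuclideanSpace.real_norm_sq_eq]; simp [dotProduct, sq]
  rw [← this]; simp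

/-- embedding of finite sequences -/
noncomputable def hrToH (n : ℕ) (κ : Type) [Fintype κ] [DecidableEq κ] : HRFin n κ →ₗ[ℝ] HRH n κ where
  toFun u := ⟨fun a => WithLp.toLp 2 (u.1 a), (hr_memlp_iff _).2 (hrPair_summable u.1 u.2)⟩
  map_add' u v := rfl
  map_smul' r u := rfl

/-- underlying sequence -/
noncomputable def hrOfH (n : ℕ) (κ : Type) [Fintype κ] [DecidableEq κ] : HRH n κ →ₗ[ℝ] HRSeq n κ where
  toFun y := fun a => (y a).ofLp
  map_add' u v := rfl
  map_smul' r u := rfl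

theorem hr_inner (y : HRH n κ) (u : HRFin n κ) :
    inner ℝ y (hrToH n κ u) = hrPair (hrOfH n κ y) u.1 := by
  rw [lp.inner_eq_tsum, hrPair]
  congr 1; funext a
  rw [PiLp.inner_apply, dotProduct]
  refine Finset.sum_congr rfl fun k _ => ?_
  exact mul_comm _ _

theorem hr_norm_sq (u : HRFin n κ) : ‖hrToH n κ u‖ ^ 2 = hrPair u.1 u.1 := by
  rw [← real_inner_self_eq_norm_sq, hr_inner]; rfl

theorem hr_summable_add {y z : HRSeq n κ} (h1 : Summable fun a => y a ⬝ᵥ y a)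
    (g1 : Summable fun a => z a ⬝ᵥ z a) : Summable fun a => (y + z) a ⬝ᵥ (y + z) a := by
  refine Summable.of_nonneg_of_le (fun a => ?_) (fun a => ?_) ((h1.mul_left 2).add (g1.mul_left 2))
  · simp only [dotProduct]; exact Finset.sum_nonneg fun i _ => mul_self_nonneg _
  · have h1 : 0 ≤ (y a - z a) ⬝ᵥ (y a - z a) := by
      simp only [dotProduct]; exact Finset.sum_nonneg fun i _ => mul_self_nonneg _
    simp only [sub_dotProduct, dotProduct_sub] at h1
    simp only [Pi.add_apply, add_dotProduct, dotProduct_add]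
    rw [dotProduct_comm (z a) (y a)] at *
    linarith

/-- cokernel space -/
noncomputable def hrW (α e : Fin n → Matrix κ κ ℝ) (d : ℕ) : Submodule ℝ (HRSeq n κ) where
  carrier := {y | (Summable fun a => y a ⬝ᵥ y a) ∧ (∀ a, Even (∑ i, a i) → y a = 0) ∧
    (∀ a, Even (∑ i, a i) → d < ∑ i, a i → hrD α e y a = 0)}
  zero_mem' := by simp [summable_zero]
  add_mem' := by
    rintro y z ⟨h1, h2, h3⟩ ⟨g1, g2, g3⟩
    refine ⟨hr_summable_add h1 g1, fun a ha => ?_, fun a ha hd => ?_⟩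
    · rw [Pi.add_apply, h2 a ha, g2 a ha, add_zero]
    · rw [map_add, Pi.add_apply, h3 a ha hd, g3 a ha hd, add_zero]
  smul_mem' := by
    rintro r y ⟨h1, h2, h3⟩
    refine ⟨?_, fun a ha => ?_, fun a ha hd => ?_⟩
    · refine (h1.mul_left (r * r)).congr fun a => ?_
      rw [Pi.smul_apply, smul_dotProduct, dotProduct_smul, smul_eq_mul, smul_eq_mul, mul_assoc]
    · rw [Pi.smul_apply, h2 a ha, smul_zero]
    · rw [map_smul, Pi.smul_apply, h3 a ha hd, smul_zero]

theorem hr_mem_W (α e : Fin n → Matrix κ κ ℝ) (d : ℕ) (y : HRSeq n κ) : y ∈ hrW α e d ↔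
    (Summable fun a => y a ⬝ᵥ y a) ∧ (∀ a, Even (∑ i, a i) → y a = 0) ∧
    (∀ a, Even (∑ i, a i) → d < ∑ i, a i → hrD α e y a = 0) := Iff.rfl

/-- finite vectors supported on a set -/
def HRSup (n : ℕ) (κ : Type) (p : (Fin n → ℕ) → Prop) : Submodule ℝ (HRSeq n κ) where
  carrier := {u | u ∈ HRFin n κ ∧ ∀ a, ¬ p a → u a = 0}
  zero_mem' := ⟨Submodule.zero_mem _, by simp⟩
  add_mem' := fun ha hb => ⟨Submodule.add_mem _ ha.1 hb.1, fun a h => by simp [ha.2 a h, hb.2 a h]⟩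
  smul_mem' := fun c u hu => ⟨Submodule.smul_mem _ _ hu.1, fun a h => by simp [hu.2 a h]⟩

/-- the operator used in the homotopy -/
noncomputable def hrT (α e : Fin n → Matrix κ κ ℝ) (d : ℕ) :
    (HRSup n κ (fun a => Even (∑ i, a i) ∧ d < ∑ i, a i) × HRSup n κ (fun a => Even (∑ i, a i)))
      →ₗ[ℝ] HRH n κ :=
  hrToH n κ ∘ₗ LinearMap.codRestrict (HRFin n κ)
    (hrD α e ∘ₗ Submodule.subtype _ ∘ₗ LinearMap.fst ℝ _ _ + Submodule.subtype _ ∘ₗ LinearMap.snd ℝ _ _)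
    (fun x => Submodule.add_mem _ (hrD_fin _ _ x.1.2.1) x.2.2.1)

theorem hrT_apply (α e : Fin n → Matrix κ κ ℝ) (d : ℕ) (x) :
    hrT α e d x = hrToH n κ ⟨hrD α e x.1.1 + x.2.1,
      Submodule.add_mem _ (hrD_fin _ _ x.1.2.1) x.2.2.1⟩ := rfl

theorem hrPair_delta (z : HRSeq n κ) (a : Fin n → ℕ) (w : κ → ℝ) :
    hrPair z (Pi.single a w) = z a ⬝ᵥ w := by
  unfold hrPair
  rw [tsum_eq_single a]
  · simp
  · intro b hb; simp [Pi.single_eq_of_ne hb]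

theorem hr_delta_fin (a : Fin n → ℕ) (w : κ → ℝ) : (Pi.single a w : HRSeq n κ) ∈ HRFin n κ := by
  refine Set.Finite.subset (Set.finite_singleton a) ?_
  intro b hb
  by_contra h
  exact hb (Pi.single_eq_of_ne h _)

theorem hr_delta_sup (p : (Fin n → ℕ) → Prop) (a : Fin n → ℕ) (h : p a) (w : κ → ℝ) :
    (Pi.single a w : HRSeq n κ) ∈ HRSup n κ p := by
  refine ⟨hr_delta_fin a w, fun b hb => Pi.single_eq_of_ne ?_ _⟩
  rintro rfl; exact hb h

theorem hrT_orth (α e : Fin n → Matrix κ κ ℝ) (η : ℝ) (hη : η * η = 1) (hα : ∀ i, (α i)ᵀ = η • α i)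
    (he : ∀ i, (e i)ᵀ = -(η • e i)) (d : ℕ) (y : HRH n κ) :
    y ∈ (LinearMap.range (hrT α e d))ᗮ ↔ hrOfH n κ y ∈ hrW α e d := by
  have hη0 : η ≠ 0 := by rintro rfl; simp at hη
  rw [Submodule.mem_orthogonal', hr_mem_W]
  constructor
  · intro h
    have key : ∀ x : (HRSup n κ (fun a => Even (∑ i, a i) ∧ d < ∑ i, a i) ×
        HRSup n κ (fun a => Even (∑ i, a i))), hrPair (hrOfH n κ y) (hrD α e x.1.1 + x.2.1) = 0 := by
      intro x
      have := h _ ⟨x, rfl⟩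
      rwa [hrT_apply, hr_inner] at this
    refine ⟨(hr_memlp_iff _).1 y.2, ?_, ?_⟩
    · intro a ha
      have := key (0, ⟨_, hr_delta_sup _ a ha (hrOfH n κ y a)⟩)
      simp only [Submodule.coe_zero, Prod.fst_zero, map_zero, zero_add, hrPair_delta] at this
      exact dotProduct_self_eq_zero.1 this
    · intro a ha hd
      have := key (⟨_, hr_delta_sup _ a ⟨ha, hd⟩ (hrD α e (hrOfH n κ y) a)⟩, 0)
      simp only [Submodule.coe_zero, add_zero] at this
      rw [hrPair_D α e η hα he _ (hr_delta_fin _ _), hrPair_delta] at this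
      exact dotProduct_self_eq_zero.1 ((mul_eq_zero.1 this).resolve_left hη0)
  · rintro ⟨-, h2, h3⟩ _ ⟨x, rfl⟩
    rw [hrT_apply, hr_inner]
    rw [hrPair_add_right _ (hrD_fin _ _ x.1.2.1) x.2.2.1, hrPair_D α e η hα he _ x.1.2.1]
    have e1 : hrPair (hrD α e (hrOfH n κ y)) x.1.1 = 0 := by
      unfold hrPair
      have : ∀ a, hrD α e (hrOfH n κ y) a ⬝ᵥ x.1.1 a = 0 := by
        intro a
        by_cases ha : Even (∑ i, a i) ∧ d < ∑ i, a i
        · rw [h3 a ha.1 ha.2, zero_dotProduct]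
        · rw [x.1.2.2 a ha, dotProduct_zero]
      simp [this]
    have e2 : hrPair (hrOfH n κ y) x.2.1 = 0 := by
      unfold hrPair
      have : ∀ a, hrOfH n κ y a ⬝ᵥ x.2.1 a = 0 := by
        intro a
        by_cases ha : Even (∑ i, a i)
        · rw [h2 a ha, zero_dotProduct]
        · rw [x.2.2.2 a ha, dotProduct_zero]
      simp [this]
    rw [e1, e2]; simp

theorem hrT_rank (α e : Fin n → Matrix κ κ ℝ) (η : ℝ) (hη : η * η = 1) (hα : ∀ i, (α i)ᵀ = η • α i)
    (he : ∀ i, (e i)ᵀ = -(η • e i)) (d : ℕ) :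
    Module.rank ℝ (LinearMap.range (hrT α e d))ᗮ = Module.rank ℝ (hrW α e d) := by
  let f : (LinearMap.range (hrT α e d))ᗮ →ₗ[ℝ] hrW α e d :=
    LinearMap.codRestrict _ (hrOfH n κ ∘ₗ Submodule.subtype _)
      (fun y => (hrT_orth α e η hη hα he d y.1).1 y.2)
  refine (LinearEquiv.ofBijective f ⟨?_, ?_⟩).rank_eq
  · intro y z h
    have h' : hrOfH n κ y.1 = hrOfH n κ z.1 := congrArg Subtype.val h
    apply Subtype.ext; apply Subtype.ext
    funext a
    exact (WithLp.ofLp_injective 2) (congrFun h' a)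
  · intro y
    let z : HRH n κ := ⟨fun a => WithLp.toLp 2 (y.1 a), (hr_memlp_iff _).2 y.2.1⟩
    exact ⟨⟨z, (hrT_orth α e η hη hα he d z).2 y.2⟩, rfl⟩

theorem hrD_odd (α e : Fin n → Matrix κ κ ℝ) (u : HRSeq n κ)
    (hu : ∀ a, ¬ Even (∑ i, a i) → u a = 0) (a) (ha : Even (∑ i, a i)) : hrD α e u a = 0 := by
  have hsum : ∀ (i : Fin n) m, ∑ j, Function.update a i m j + a i = ∑ j, a j + m := by
    intro i m
    rw [← Finset.add_sum_erase _ _ (Finset.mem_univ i), ← Finset.add_sum_erase _ a (Finset.mem_univ i),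
      Function.update_self]
    have : ∑ x ∈ Finset.univ.erase i, Function.update a i m x = ∑ x ∈ Finset.univ.erase i, a x :=
      Finset.sum_congr rfl fun j hj => by rw [Function.update_of_ne (Finset.ne_of_mem_erase hj)]
    rw [this]; ring
  simp only [hrD, LinearMap.sum_apply, LinearMap.add_apply, Module.End.mul_apply, Finset.sum_apply,
    Pi.add_apply, hrMat_apply, hrLo_apply, hrHi_apply]
  refine Finset.sum_eq_zero fun i _ => ?_
  have h1 : u (Function.update a i (a i + 1)) = 0 := by
    apply hu
    have := hsum i (a i + 1)
    have h : ∑ j, Function.update a i (a i + 1) j = ∑ j, a j + 1 := by omega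
    rw [h, Nat.even_add_one]; exact not_not.2 ha
  have h2 : Real.sqrt (a i) • u (Function.update a i (a i - 1)) = 0 := by
    rcases Nat.eq_zero_or_pos (a i) with h0 | h0
    · simp [h0]
    · rw [hu, smul_zero]
      have := hsum i (a i - 1)
      have h : ∑ j, Function.update a i (a i - 1) j + 1 = ∑ j, a j := by omega
      rw [← h, Nat.even_add_one] at ha; exact ha
  rw [h1, h2]; simp

theorem hrT_norm (α e : Fin n → Matrix κ κ ℝ) (d : ℕ) (x) :
    hrPair (hrD α e x.1.1) (hrD α e x.1.1) ≤ ‖hrT α e d x‖ ^ 2 := by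
  rw [hrT_apply, hr_norm_sq]
  have hx := hrD_fin α e x.1.2.1
  rw [hrPair_add_right _ hx x.2.2.1, hrPair_add_left _ _ hx, hrPair_add_left _ _ x.2.2.1]
  have e1 : hrPair (hrD α e x.1.1) x.2.1 = 0 := by
    unfold hrPair
    have : ∀ a, hrD α e x.1.1 a ⬝ᵥ x.2.1 a = 0 := by
      intro a
      by_cases ha : Even (∑ i, a i)
      · rw [hrD_odd α e x.1.1 (fun b hb => x.1.2.2 b (fun h => hb h.1)) a ha, zero_dotProduct]
      · rw [x.2.2.2 a ha, dotProduct_zero]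
    simp [this]
  have e2 : hrPair x.2.1 (hrD α e x.1.1) = 0 := by rw [hrPair_comm, e1]
  rw [e1, e2]
  have := hrPair_nonneg x.2.1
  linarith

theorem hr_homotopy (α₀ α₁ e : Fin n → Matrix κ κ ℝ) (η : ℝ) (hη : η * η = 1)
    (hα₀ : ∀ i, (α₀ i)ᵀ = η • α₀ i) (hα₁ : ∀ i, (α₁ i)ᵀ = η • α₁ i) (he : ∀ i, (e i)ᵀ = -(η • e i))
    (hαe₀ : ∀ i j, α₀ i * e j = -(e j * α₀ i)) (hαe₁ : ∀ i j, α₁ i * e j = -(e j * α₁ i))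
    (hee : ∀ i j, e i * e j + e j * e i = if i = j then (2 * (-η)) • 1 else 0)
    (c : ℝ) (hc : 0 < c) (hc1 : c ≤ 1)
    (hell : ∀ t : ℝ, 0 ≤ t → t ≤ 1 → ∀ (v : Fin n → ℝ) (w : κ → ℝ), c * (∑ i, v i ^ 2) * (w ⬝ᵥ w) ≤
      ((∑ i, v i • ((1 - t) • α₀ i + t • α₁ i)) *ᵥ w) ⬝ᵥ
      ((∑ i, v i • ((1 - t) • α₀ i + t • α₁ i)) *ᵥ w)) :
    ∃ d, Module.rank ℝ (hrW α₀ e d) = Module.rank ℝ (hrW α₁ e d) := by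
  obtain ⟨C₀, hC₀, hK₀⟩ := hr_mat_bound2 (n := n) (∑ i, α₀ i * e i)
  obtain ⟨C₁, hC₁, hK₁⟩ := hr_mat_bound2 (n := n) (∑ i, α₁ i * e i)
  obtain ⟨d, hd⟩ := exists_nat_ge ((C₀ + C₁) / c)
  have hd' : C₀ + C₁ ≤ c * d := by rw [div_le_iff₀ hc] at hd; linarith
  refine ⟨d, ?_⟩
  let α : ℝ → Fin n → Matrix κ κ ℝ := fun t i => (1 - t) • α₀ i + t • α₁ i
  have hα : ∀ t i, (α t i)ᵀ = η • α t i := by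
    intro t i
    simp only [α, transpose_add, transpose_smul, hα₀, hα₁]
    module
  have hαe : ∀ t i j, α t i * e j = -(e j * α t i) := by
    intro t i j
    simp only [α, add_mul, mul_add, smul_mul_assoc, mul_smul_comm, hαe₀, hαe₁]
    module
  have hα0 : α 0 = α₀ := by funext i; simp [α]
  have hα1 : α 1 = α₁ := by funext i; simp [α]
  rw [← hα0, ← hα1, ← hrT_rank (α 0) e η hη (hα 0) he d, ← hrT_rank (α 1) e η hη (hα 1) he d]
  choose Cb hCb hB using fun i => hr_mat_bound' (n := n) (α₁ i - α₀ i)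
  have hsq : ∀ t, 0 ≤ t → t ≤ 1 → ∀ x : (HRSup n κ (fun a => Even (∑ i, a i) ∧ d < ∑ i, a i) ×
      HRSup n κ (fun a => Even (∑ i, a i))), c / 2 * hrS2 x.1.1 ≤ ‖hrT (α t) e d x‖ ^ 2 := by
    intro t h0 h1 x
    refine le_trans ?_ (hrT_norm (α t) e d x)
    have hu := x.1.2.1
    have hK : |hrPair (hrMat n (∑ i, α t i * e i) x.1.1) x.1.1| ≤ (C₀ + C₁) * hrPair x.1.1 x.1.1 := by
      have e1 : (∑ i, α t i * e i) = (1 - t) • (∑ i, α₀ i * e i) + t • (∑ i, α₁ i * e i) := by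
        simp only [α, add_mul, smul_mul_assoc, Finset.sum_add_distrib, Finset.smul_sum]
      rw [e1, map_add, map_smul, map_smul, LinearMap.add_apply, hrPair_add_left _ _ hu,
        LinearMap.smul_apply, LinearMap.smul_apply, hrPair_smul_left, hrPair_smul_left]
      have k0 := hK₀ _ hu
      have k1 := hK₁ _ hu
      have p0 := hrPair_nonneg x.1.1
      refine (abs_add_le _ _).trans ?_
      rw [abs_mul, abs_mul, abs_of_nonneg h0, abs_of_nonneg (sub_nonneg.2 h1), add_mul]
      refine add_le_add ?_ ?_
      · exact (mul_le_mul_of_nonneg_left k0 (sub_nonneg.2 h1)).trans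
          (mul_le_of_le_one_left (mul_nonneg hC₀ p0) (by linarith))
      · exact (mul_le_mul_of_nonneg_left k1 h0).trans
          (mul_le_of_le_one_left (mul_nonneg hC₁ p0) (by linarith))
    have hg := hr_garding (α t) e η hη (hα t) he (hαe t) hee c (C₀ + C₁) hc1 (hell t h0 h1) hu hK
    have hl := hrS2_lower d hu (fun a ha => by
      by_contra hcon
      exact ha (x.1.2.2 a (fun h => hcon h.2.le)))
    have p0 := hrPair_nonneg x.1.1
    have : 2 * (C₀ + C₁) * hrPair x.1.1 x.1.1 ≤ c / 2 * (4 * d * hrPair x.1.1 x.1.1) := by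
      nlinarith
    have h3 : c / 2 * (4 * d * hrPair x.1.1 x.1.1) ≤ c / 2 * hrS2 x.1.1 :=
      mul_le_mul_of_nonneg_left hl (by positivity)
    linarith
  refine hr_rank_path (fun t => hrT (α t) e d) (fun x => Real.sqrt (hrS2 x.1.1)) (Real.sqrt (c / 2))
    (∑ i, Real.sqrt (Cb i)) (by positivity) (Finset.sum_nonneg fun _ _ => Real.sqrt_nonneg _)
    (fun _ => Real.sqrt_nonneg _) ?_ ?_
  · intro t h0 h1 x
    rw [← Real.sqrt_mul (by positivity)]
    exact Real.sqrt_le_iff.2 ⟨norm_nonneg _, hsq t h0 h1 x⟩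
  · intro t t' x
    have hu := x.1.2.1
    have hfin : ∀ i, hrMat n (α₁ i - α₀ i) (hrX κ i x.1.1) ∈ HRFin n κ := fun i => hrMat_fin _ (hrX_fin _ hu)
    have e1 : hrT (α t) e d x - hrT (α t') e d x =
        (t - t') • ∑ i, hrToH n κ ⟨hrMat n (α₁ i - α₀ i) (hrX κ i x.1.1), hfin i⟩ := by
      rw [hrT_apply, hrT_apply, ← map_sub, ← map_sum, ← map_smul]
      congr 1
      apply Subtype.ext
      simp only [Submodule.coe_sub, Submodule.coe_smul, AddSubmonoidClass.coe_finsetSum, hrD_eq,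
        LinearMap.add_apply, LinearMap.sum_apply, Module.End.mul_apply, α, map_add, map_sub, map_smul,
        LinearMap.smul_apply, LinearMap.sub_apply, Finset.sum_add_distrib, Finset.sum_sub_distrib,
        ← Finset.smul_sum]
      module
    rw [e1, norm_smul, Real.norm_eq_abs]
    refine mul_le_mul_of_nonneg_left ?_ (abs_nonneg _)
    refine (norm_sum_le _ _).trans ?_
    rw [Finset.sum_mul]
    refine Finset.sum_le_sum fun i _ => ?_
    rw [← Real.sqrt_mul (hCb i)]
    refine Real.le_sqrt_of_sq_le ?_
    rw [hr_norm_sq]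
    refine (hB i _ (hrX_fin i hu)).trans (mul_le_mul_of_nonneg_left ?_ (hCb i))
    refine le_trans ?_ (Finset.single_le_sum (f := fun i => hrPair (hrX κ i x.1.1) (hrX κ i x.1.1) + hrPair (hrP κ i x.1.1) (hrP κ i x.1.1)) (fun j _ => add_nonneg (hrPair_nonneg _) (hrPair_nonneg _)) (Finset.mem_univ i))
    have := hrPair_nonneg (hrP κ i x.1.1)
    linarith

end


theorem hr_half {V : Type} [AddCommGroup V] [Module ℝ V] [FiniteDimensional ℝ V]
    (f g : Module.End ℝ V) (r : ℝ) (hr : r ≠ 0) (hf : f * f = 0) (hfg : g * f + f * g = r • 1) :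
    2 * Module.finrank ℝ (LinearMap.ker f) = Module.finrank ℝ V := by
  have h : LinearMap.range f = LinearMap.ker f := by
    apply le_antisymm
    · rintro _ ⟨x, rfl⟩
      rw [LinearMap.mem_ker, ← Module.End.mul_apply, hf]; rfl
    · intro x hx
      rw [LinearMap.mem_ker] at hx
      have := LinearMap.congr_fun hfg x
      simp only [LinearMap.add_apply, Module.End.mul_apply, hx, map_zero, zero_add,
        LinearMap.smul_apply, Module.End.one_apply] at this
      exact ⟨r⁻¹ • g x, by rw [map_smul, this, smul_smul, inv_mul_cancel₀ hr, one_smul]⟩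
  have := f.finrank_range_add_finrank_ker
  rw [h] at this
  omega

theorem hr_halves {V : Type} [AddCommGroup V] [Module ℝ V] [FiniteDimensional ℝ V] {m : ℕ}
    (f g : Fin m → Module.End ℝ V) (r : ℝ) (hr : r ≠ 0) (hf : ∀ i j, f i * f j + f j * f i = 0)
    (hfg : ∀ i j, g i * f j + f j * g i = if i = j then r • 1 else 0) (s : Finset (Fin m)) :
    2 ^ s.card * Module.finrank ℝ (⨅ i ∈ s, LinearMap.ker (f i) : Submodule ℝ V) =
      Module.finrank ℝ V := by
  classical
  induction s using Finset.induction_on with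
  | empty =>
    have : (⨅ i ∈ (∅ : Finset (Fin m)), LinearMap.ker (f i) : Submodule ℝ V) = ⊤ := by simp
    rw [this]; simp
  | insert a s ha ih =>
    rw [Finset.card_insert_of_notMem ha, pow_succ, ← ih, mul_assoc]
    congr 1
    rw [Finset.iInf_insert]
    set W : Submodule ℝ V := ⨅ i ∈ s, LinearMap.ker (f i) with hW
    have memW : ∀ x, x ∈ W ↔ ∀ i ∈ s, f i x = 0 := by intro x; simp [hW]
    have hfW : ∀ x ∈ W, f a x ∈ W := by
      intro x hx
      rw [memW] at hx ⊢
      intro i hi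
      have := LinearMap.congr_fun (hf i a) x
      simp only [LinearMap.add_apply, Module.End.mul_apply, hx i hi, map_zero, add_zero,
        LinearMap.zero_apply] at this
      exact this
    have hgW : ∀ x ∈ W, g a x ∈ W := by
      intro x hx
      rw [memW] at hx ⊢
      intro i hi
      have := LinearMap.congr_fun (hfg a i) x
      have hne : a ≠ i := by rintro rfl; exact ha hi
      rw [if_neg hne] at this
      simp only [LinearMap.add_apply, Module.End.mul_apply, hx i hi, map_zero, zero_add,
        LinearMap.zero_apply] at this
      exact this
    have key := hr_half ((f a).restrict hfW) ((g a).restrict hgW) r hr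
      (by
        ext x
        have h1 := LinearMap.congr_fun (hf a a) x.1
        simp only [LinearMap.add_apply, Module.End.mul_apply, LinearMap.zero_apply] at h1
        have h2 : (2:ℝ) • f a (f a x.1) = 0 := by rw [two_smul]; exact h1
        have h3 := (smul_eq_zero.1 h2).resolve_left two_ne_zero
        simpa using h3)
      (by
        ext x
        have h1 := LinearMap.congr_fun (hfg a a) x.1
        rw [if_pos rfl] at h1
        simpa using h1)
    rw [← key]
    congr 1
    rw [LinearMap.ker_restrict, ← Submodule.finrank_map_subtype_eq W,
      Submodule.map_comap_subtype, inf_comm]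

section
variable {n : ℕ} {κ : Type} [Fintype κ] [DecidableEq κ]

theorem hr_sum_update (a : Fin n → ℕ) (i : Fin n) (m : ℕ) :
    ∑ j, Function.update a i m j + a i = ∑ j, a j + m := by
  rw [← Finset.add_sum_erase _ _ (Finset.mem_univ i), ← Finset.add_sum_erase _ a (Finset.mem_univ i),
    Function.update_self]
  have : ∑ x ∈ Finset.univ.erase i, Function.update a i m x = ∑ x ∈ Finset.univ.erase i, a x :=
    Finset.sum_congr rfl fun j hj => by rw [Function.update_of_ne (Finset.ne_of_mem_erase hj)]
  rw [this]; ring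

theorem hrD_even (α e : Fin n → Matrix κ κ ℝ) (u : HRSeq n κ)
    (hu : ∀ a, Even (∑ i, a i) → u a = 0) (a) (ha : ¬ Even (∑ i, a i)) : hrD α e u a = 0 := by
  simp only [hrD, LinearMap.sum_apply, LinearMap.add_apply, Module.End.mul_apply, Finset.sum_apply,
    Pi.add_apply, hrMat_apply, hrLo_apply, hrHi_apply]
  refine Finset.sum_eq_zero fun i _ => ?_
  have h1 : u (Function.update a i (a i + 1)) = 0 := by
    apply hu
    have := hr_sum_update a i (a i + 1)
    have h : ∑ j, Function.update a i (a i + 1) j = ∑ j, a j + 1 := by omega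
    rw [h, Nat.even_add_one]; exact ha
  have h2 : Real.sqrt (a i) • u (Function.update a i (a i - 1)) = 0 := by
    rcases Nat.eq_zero_or_pos (a i) with h0 | h0
    · simp [h0]
    · rw [hu, smul_zero]
      have := hr_sum_update a i (a i - 1)
      have h : ∑ j, Function.update a i (a i - 1) j + 1 = ∑ j, a j := by omega
      rw [← h, Nat.even_add_one, not_not] at ha; exact ha
  rw [h1, h2]; simp

theorem hrX_comm (i j : Fin n) : hrX κ i * hrX κ j = hrX κ j * hrX κ i := by
  rcases eq_or_ne i j with rfl | h
  · rfl
  · simp only [hrX, add_mul, mul_add]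
    rw [hrLo_comm i j, hrHi_comm i j, hrLoHi_comm h, ← hrLoHi_comm h.symm]
    abel

theorem hrD_sq (α e : Fin n → Matrix κ κ ℝ) (η : ℝ) (hη : η * η = 1)
    (hαe : ∀ i j, α i * e j = -(e j * α i))
    (hαα : ∀ i j, α i * α j + α j * α i = if i = j then (2 * η) • 1 else 0)
    (hee : ∀ i j, e i * e j + e j * e i = if i = j then (2 * (-η)) • 1 else 0)
    (w : HRSeq n κ) (a) :
    hrD α e (hrD α e w) a = η • ((4 * ∑ i, (a i : ℝ)) • w a +
      (∑ i, ((2:ℝ) • 1 - (2 * η) • (α i * e i))) *ᵥ w a) := by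
  set A : Module.End ℝ (HRSeq n κ) := ∑ i, hrMat n (α i) * hrX κ i with hA
  set B : Module.End ℝ (HRSeq n κ) := ∑ i, hrMat n (e i) * hrP κ i with hB
  have hBB : B * B = (-η) • ∑ i, hrP κ i * hrP κ i := by
    refine hr_sq_sum (fun i => hrMat n (e i)) (fun i => hrP κ i) (-η) (fun i j => hrMat_P _ _) hrP_comm ?_
    intro i j
    simp only [← map_mul, ← map_add, hee]
    split_ifs <;> simp
  have hAA : A * A = η • ∑ i, hrX κ i * hrX κ i := by
    refine hr_sq_sum (fun i => hrMat n (α i)) (fun i => hrX κ i) η (fun i j => hrMat_X _ _) hrX_comm ?_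
    intro i j
    simp only [← map_mul, ← map_add, hαα]
    split_ifs <;> simp
  have hAB : A * B + B * A = (-2:ℝ) • ∑ i, hrMat n (α i * e i) := by
    have := hr_anti_sum (fun i => hrMat n (α i)) (fun i => hrX κ i) (fun i => hrMat n (e i))
      (fun i => hrP κ i) (-2) (fun i j => hrMat_P _ _) (fun i j => hrMat_X _ _)
      (fun i j => by rw [← map_mul, ← map_mul, ← map_neg, hαe]) hrXP
    rw [hA, hB, this]
    simp only [map_mul]
  have hsq : hrD α e * hrD α e = ∑ i, (η • ((4:ℝ) • hrNum κ i + (2:ℝ) • (1 : Module.End ℝ (HRSeq n κ)))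
      + (-2:ℝ) • hrMat n (α i * e i)) := by
    have e1 : hrD α e * hrD α e = A * A + (A * B + B * A) + B * B := by
      rw [hrD_eq]; noncomm_ring
    rw [e1, hAA, hAB, hBB, Finset.sum_add_distrib, ← Finset.smul_sum, ← Finset.smul_sum]
    simp only [← hrXX_sub_PP, Finset.sum_sub_distrib]
    module
  have := congrFun (LinearMap.congr_fun hsq w) a
  rw [Module.End.mul_apply] at this
  rw [this]
  simp only [LinearMap.sum_apply, Finset.sum_apply, LinearMap.add_apply, LinearMap.smul_apply, Pi.add_apply,
    Pi.smul_apply, hrNum_apply, Module.End.one_apply, hrMat_apply, Matrix.sum_mulVec, Matrix.sub_mulVec,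
    Matrix.smul_mulVec, Matrix.one_mulVec, smul_add, Finset.smul_sum, Finset.mul_sum, Finset.sum_smul]
  rw [← Finset.sum_add_distrib]
  refine Finset.sum_congr rfl fun i _ => ?_
  have : η • (2 * η) • ((α i * e i) *ᵥ w a) = (2:ℝ) • ((α i * e i) *ᵥ w a) := by
    rw [smul_smul]; congr 1; linear_combination 2 * hη
  rw [smul_sub, this]
  module

theorem hr_clifford_rank (α e : Fin n → Matrix κ κ ℝ) (η : ℝ) (hη : η * η = 1)
    (hα : ∀ i, (α i)ᵀ = η • α i) (he : ∀ i, (e i)ᵀ = -(η • e i))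
    (hαe : ∀ i j, α i * e j = -(e j * α i))
    (hαα : ∀ i j, α i * α j + α j * α i = if i = j then (2 * η) • 1 else 0)
    (hee : ∀ i j, e i * e j + e j * e i = if i = j then (2 * (-η)) • 1 else 0) (d : ℕ) :
    Module.Finite ℝ (hrW α e d) ∧ ∃ c k : ℕ, Module.finrank ℝ (hrW α e d) + k = c * Fintype.card κ ∧
      2 ^ n * k = Fintype.card κ := by
  classical
  have hη0 : η ≠ 0 := by rintro rfl; simp at hη
  set β : Fin n → Matrix κ κ ℝ := fun i => α i + e i with hβ
  set γ : Fin n → Matrix κ κ ℝ := fun i => α i - e i with hγ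
  have hβT : ∀ i, (β i)ᵀ = η • γ i := by
    intro i; simp only [hβ, hγ, transpose_add, hα, he]; module
  have hββ : ∀ i j, β i * β j + β j * β i = 0 := by
    intro i j
    have h1 : β i * β j + β j * β i = (α i * α j + α j * α i) + (e i * e j + e j * e i)
      + (α i * e j + e j * α i) + (α j * e i + e i * α j) := by simp only [hβ]; noncomm_ring
    rw [h1, hαα, hee, hαe, hαe]
    split_ifs
    · module
    · simp
  have hγγ : ∀ i j, γ i * γ j + γ j * γ i = 0 := by
    intro i j
    have h1 : γ i * γ j + γ j * γ i = (α i * α j + α j * α i) + (e i * e j + e j * e i)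
      - (α i * e j + e j * α i) - (α j * e i + e i * α j) := by simp only [hγ]; noncomm_ring
    rw [h1, hαα, hee, hαe, hαe]
    split_ifs
    · module
    · simp
  have hβγ : ∀ i j, β i * γ j + γ j * β i = if i = j then (4 * η) • 1 else 0 := by
    intro i j
    have h1 : β i * γ j + γ j * β i = (α i * α j + α j * α i) - (e i * e j + e j * e i)
      - (α i * e j + e j * α i) + (α j * e i + e i * α j) := by simp only [hβ, hγ]; noncomm_ring
    rw [h1, hαα, hee, hαe, hαe]
    split_ifs
    · module
    · simp
  set Ψ : Matrix κ κ ℝ := ∑ i, ((2:ℝ) • 1 - (2 * η) • (α i * e i)) with hΨ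
  have hΨ1 : Ψ = ∑ i, η • (β i * γ i) := by
    rw [hΨ]
    refine Finset.sum_congr rfl fun i _ => ?_
    have h1 : β i * γ i = (α i * α i) - (e i * e i) - α i * e i + e i * α i := by
      simp only [hβ, hγ]; noncomm_ring
    have h2 := hαα i i
    have h3 := hee i i
    rw [if_pos rfl, ← two_smul ℝ, mul_smul] at h2 h3
    have h2' := smul_right_injective _ (two_ne_zero : (2:ℝ) ≠ 0) h2
    have h3' := smul_right_injective _ (two_ne_zero : (2:ℝ) ≠ 0) h3
    have h4 : e i * α i = -(α i * e i) := by rw [hαe, neg_neg]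
    rw [h1, h2', h3', h4]
    have : η • (η • (1 : Matrix κ κ ℝ)) = 1 := by rw [smul_smul, hη, one_smul]
    simp only [smul_add, smul_sub, neg_smul, smul_neg, this]
    module
  have hquad : ∀ w, w ⬝ᵥ (Ψ *ᵥ w) = ∑ i, (γ i *ᵥ w) ⬝ᵥ (γ i *ᵥ w) := by
    intro w
    rw [hΨ1, Matrix.sum_mulVec, dotProduct_sum]
    refine Finset.sum_congr rfl fun i _ => ?_
    have : (β i)ᵀ *ᵥ w = η • (γ i *ᵥ w) := by rw [hβT, Matrix.smul_mulVec]
    rw [Matrix.smul_mulVec, ← Matrix.mulVec_mulVec, dotProduct_smul, Matrix.dotProduct_mulVec,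
      ← Matrix.mulVec_transpose, this, smul_dotProduct, smul_smul, hη, one_smul]
  have hnn : ∀ w : κ → ℝ, 0 ≤ w ⬝ᵥ w := fun w => by
    simp only [dotProduct]; exact Finset.sum_nonneg fun i _ => mul_self_nonneg _
  have hinj : ∀ r : ℝ, 0 < r → ∀ w, r • w + Ψ *ᵥ w = 0 → w = 0 := by
    intro r hr w hw
    have h1 : w ⬝ᵥ (r • w + Ψ *ᵥ w) = 0 := by rw [hw, dotProduct_zero]
    rw [dotProduct_add, dotProduct_smul, hquad, smul_eq_mul] at h1
    have h2 : 0 ≤ ∑ i, (γ i *ᵥ w) ⬝ᵥ (γ i *ᵥ w) := Finset.sum_nonneg fun i _ => hnn _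
    have h3 : w ⬝ᵥ w = 0 := by
      have := hnn w
      nlinarith
    exact dotProduct_self_eq_zero.1 h3
  have hsurj : ∀ r : ℝ, 0 < r → ∀ z, ∃ w, r • w + Ψ *ᵥ w = z := by
    intro r hr z
    let L : (κ → ℝ) →ₗ[ℝ] (κ → ℝ) := r • LinearMap.id + Ψ.mulVecLin
    have hL : Function.Injective L := by
      rw [← LinearMap.ker_eq_bot, LinearMap.ker_eq_bot']
      intro w hw
      exact hinj r hr w hw
    exact (LinearMap.injective_iff_surjective.1 hL) z
  have hβΨ : ∀ j, Ψ * β j = β j * ((4:ℝ) • 1 + Ψ) := by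
    intro j
    have h1 : ∀ i, (η • (β i * γ i)) * β j = β j * (η • (β i * γ i)) +
        if i = j then (4:ℝ) • β j else 0 := by
      intro i
      have h2 : γ i * β j = -(β j * γ i) + if j = i then (4 * η) • 1 else 0 := by
        rw [← hβγ j i]; abel
      have h3 : β i * β j = -(β j * β i) := eq_neg_of_add_eq_zero_left (hββ i j)
      rw [smul_mul_assoc, mul_assoc, h2, mul_add, mul_neg, ← mul_assoc, h3, neg_mul, neg_neg, smul_add,
        mul_smul_comm, mul_assoc]
      congr 1
      rcases eq_or_ne i j with rfl | h
      · simp only [if_true, mul_smul_comm, mul_one, smul_smul]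
        congr 1; linear_combination 4 * hη
      · simp [h, h.symm]
    rw [hΨ1, Finset.sum_mul]
    simp only [h1, Finset.sum_add_distrib, ← Finset.mul_sum]
    simp [mul_add, add_comm]
  have hrange : ∀ j x, β j *ᵥ x ∈ LinearMap.range Ψ.mulVecLin := by
    intro j x
    obtain ⟨w, hw⟩ := hsurj 4 (by norm_num) x
    refine ⟨β j *ᵥ w, ?_⟩
    have h1 : ((4:ℝ) • 1 + Ψ) *ᵥ w = x := by
      rw [Matrix.add_mulVec, Matrix.smul_mulVec, Matrix.one_mulVec, hw]
    rw [Matrix.mulVecLin_apply, Matrix.mulVec_mulVec, hβΨ, ← Matrix.mulVec_mulVec, h1]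
  have hDsq := hrD_sq α e η hη hαe hαα hee
  have hD0 : ∀ y : HRSeq n κ, hrD α e y 0 ∈ LinearMap.range Ψ.mulVecLin := by
    intro y
    simp only [hrD, LinearMap.sum_apply, LinearMap.add_apply, Module.End.mul_apply, Finset.sum_apply,
      Pi.add_apply, hrMat_apply, hrLo_apply, hrHi_apply]
    refine Submodule.sum_mem _ fun i _ => ?_
    simp only [Pi.zero_apply, Nat.cast_zero, Real.sqrt_zero, zero_smul, Matrix.mulVec_zero, add_zero]
    exact hrange i _
  let Ev := {a : Fin n → ℕ // Even (∑ i, a i) ∧ 0 < ∑ i, a i ∧ ∑ i, a i ≤ d}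
  have hfinEv : Finite Ev := by
    refine Set.Finite.subset (Set.finite_Iic (fun _ : Fin n => d)) ?_
    intro a ha i
    exact (Finset.single_le_sum (f := a) (fun _ _ => Nat.zero_le _) (Finset.mem_univ i)).trans ha.2.2
  have : Fintype Ev := Fintype.ofFinite Ev
  let F : hrW α e d →ₗ[ℝ] (Ev → κ → ℝ) × LinearMap.range Ψ.mulVecLin :=
    LinearMap.prod
      { toFun := fun y a => hrD α e y.1 a.1
        map_add' := fun y z => by funext a; simp
        map_smul' := fun r y => by funext a; simp }
      (LinearMap.codRestrict _
        { toFun := fun y => hrD α e y.1 0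
          map_add' := fun y z => by simp
          map_smul' := fun r y => by simp }
        (fun y => hD0 y.1))
  have hF1 : ∀ y a, (F y).1 a = hrD α e y.1 a.1 := fun y a => rfl
  have hF2 : ∀ y, ((F y).2 : κ → ℝ) = hrD α e y.1 0 := fun y => rfl
  have hzero : ∀ a : Fin n → ℕ, ∑ i, a i = 0 → a = 0 := by
    intro a ha
    funext i
    exact Finset.sum_eq_zero_iff.1 ha i (Finset.mem_univ i)
  have hbij : Function.Bijective F := by
    constructor
    · rw [← LinearMap.ker_eq_bot, LinearMap.ker_eq_bot']
      intro y hy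
      have hD : hrD α e y.1 = 0 := by
        funext a
        by_cases ha : Even (∑ i, a i)
        · by_cases h0 : ∑ i, a i = 0
          · rw [hzero a h0, ← hF2, hy]; rfl
          · by_cases hd : ∑ i, a i ≤ d
            · have := hF1 y ⟨a, ha, Nat.pos_of_ne_zero h0, hd⟩
              rw [← this, hy]; rfl
            · exact y.2.2.2 a ha (not_le.1 hd)
        · exact hrD_even α e y.1 y.2.2.1 a ha
      apply Subtype.ext
      funext a
      by_cases ha : Even (∑ i, a i)
      · exact y.2.2.1 a ha
      · have h1 := hDsq y.1 a
        rw [hD, map_zero] at h1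
        have h2 := (smul_eq_zero.1 h1.symm).resolve_left hη0
        refine hinj _ ?_ _ h2
        have : 0 < ∑ i, a i := by
          rcases Nat.eq_zero_or_pos (∑ i, a i) with h | h
          · rw [h] at ha; simp at ha
          · exact h
        have : (0:ℝ) < ∑ i, (a i : ℝ) := by exact_mod_cast this
        linarith
    · rintro ⟨z, x, x0, hx0⟩
      have hpos : ∀ a : Ev, (0:ℝ) < 4 * ∑ i, (a.1 i : ℝ) := by
        intro a
        have : (0:ℝ) < ∑ i, (a.1 i : ℝ) := by exact_mod_cast a.2.2.1
        linarith
      choose w0 hw0 using fun a : Ev => hsurj _ (hpos a) (z a)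
      let w : HRSeq n κ := fun a => if h : Even (∑ i, a i) ∧ 0 < ∑ i, a i ∧ ∑ i, a i ≤ d then w0 ⟨a, h⟩
        else if a = 0 then x0 else 0
      have hw_odd : ∀ a, ¬ Even (∑ i, a i) → w a = 0 := by
        intro a ha
        have h1 : ¬ (Even (∑ i, a i) ∧ 0 < ∑ i, a i ∧ ∑ i, a i ≤ d) := fun h => ha h.1
        have h2 : a ≠ 0 := by rintro rfl; simp at ha
        simp only [w, dif_neg h1, if_neg h2]
      have hw_large : ∀ a, d < ∑ i, a i → w a = 0 := by
        intro a ha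
        have h1 : ¬ (Even (∑ i, a i) ∧ 0 < ∑ i, a i ∧ ∑ i, a i ≤ d) := fun h => absurd h.2.2 (not_le.2 ha)
        have h2 : a ≠ 0 := by rintro rfl; simp at ha
        simp only [w, dif_neg h1, if_neg h2]
      have hw_zero : w 0 = x0 := by simp [w]
      have hw_ev : ∀ a : Ev, w a.1 = w0 a := by
        intro a; exact dif_pos a.2
      have hw_fin : w ∈ HRFin n κ := by
        refine Set.Finite.subset (Set.finite_Iic (fun _ : Fin n => d)) ?_
        intro a ha i
        have h1 : ∑ i, a i ≤ d := by
          by_contra h; exact ha (hw_large a (not_le.1 h))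
        exact (Finset.single_le_sum (f := a) (fun _ _ => Nat.zero_le _) (Finset.mem_univ i)).trans h1
      have hy : η • hrD α e w ∈ hrW α e d := by
        have hf : η • hrD α e w ∈ HRFin n κ := Submodule.smul_mem _ _ (hrD_fin α e hw_fin)
        refine ⟨hrPair_summable _ hf, ?_, ?_⟩
        · intro a ha
          rw [Pi.smul_apply, hrD_odd α e w hw_odd a ha, smul_zero]
        · intro a ha hd
          rw [map_smul, Pi.smul_apply, hDsq, hw_large a hd]; simp
      have hDy : ∀ a, hrD α e (η • hrD α e w) a = (4 * ∑ i, (a i : ℝ)) • w a + Ψ *ᵥ w a := by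
        intro a
        rw [map_smul, Pi.smul_apply, hDsq, smul_smul, hη, one_smul]
      refine ⟨⟨_, hy⟩, Prod.ext ?_ (Subtype.ext ?_)⟩
      · funext a
        rw [hF1, hDy, hw_ev, hw0]
      · rw [hF2, hDy, hw_zero]
        simp only [Pi.zero_apply, Nat.cast_zero, Finset.sum_const_zero, mul_zero, zero_smul, zero_add]
        exact hx0
  let Fe := LinearEquiv.ofBijective F hbij
  refine ⟨Module.Finite.equiv Fe.symm, Fintype.card Ev + 1, Module.finrank ℝ (LinearMap.ker Ψ.mulVecLin), ?_, ?_⟩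
  · rw [Fe.finrank_eq, Module.finrank_prod, add_assoc, LinearMap.finrank_range_add_finrank_ker]
    rw [Module.finrank_pi_fintype]
    simp [add_mul]
  · have hker : LinearMap.ker Ψ.mulVecLin = ⨅ i ∈ (Finset.univ : Finset (Fin n)),
        LinearMap.ker (Matrix.toLinAlgEquiv' (γ i) : Module.End ℝ (κ → ℝ)) := by
      ext w
      simp only [Finset.mem_univ, iInf_pos, Submodule.mem_iInf, LinearMap.mem_ker, Matrix.mulVecLin_apply,
        Matrix.toLinAlgEquiv'_apply]
      constructor
      · intro h i
        have h1 := hquad w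
        rw [h, dotProduct_zero] at h1
        have h2 := (Finset.sum_eq_zero_iff_of_nonneg (fun i _ => hnn _)).1 h1.symm i (Finset.mem_univ i)
        exact dotProduct_self_eq_zero.1 h2
      · intro h
        rw [hΨ1, Matrix.sum_mulVec]
        refine Finset.sum_eq_zero fun i _ => ?_
        rw [Matrix.smul_mulVec, ← Matrix.mulVec_mulVec, h, Matrix.mulVec_zero, smul_zero]
    have := hr_halves (V := κ → ℝ) (fun i => Matrix.toLinAlgEquiv' (γ i)) (fun i => Matrix.toLinAlgEquiv' (β i))
      (4 * η) (by simpa using hη0) (fun i j => by rw [← map_mul, ← map_mul, ← map_add, hγγ, map_zero])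
      (fun i j => by
        rw [← map_mul, ← map_mul, ← map_add, hβγ]
        split_ifs
        · rw [map_smul, map_one]
        · rw [map_zero]) Finset.univ
    rw [← hker] at this
    simpa using this

end


open scoped Kronecker in
/-- Clifford family of sign `s`. -/
def HRCl {n : ℕ} {κ : Type} [Fintype κ] [DecidableEq κ] (s : ℝ) (E : Fin n → Matrix κ κ ℝ) : Prop :=
  (∀ i, (E i)ᵀ = s • E i) ∧ ∀ i j, E i * E j + E j * E i = if i = j then (2 * s) • 1 else 0

section
open scoped Kronecker
variable {κ₁ κ₂ : Type} [Fintype κ₁] [DecidableEq κ₁] [Fintype κ₂] [DecidableEq κ₂]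

theorem hr_kT (A : Matrix κ₁ κ₁ ℝ) (B : Matrix κ₂ κ₂ ℝ) : (A ⊗ₖ B)ᵀ = Aᵀ ⊗ₖ Bᵀ :=
  Matrix.kroneckerMap_transpose _ _ _

theorem hr_kneg (A : Matrix κ₁ κ₁ ℝ) (B : Matrix κ₂ κ₂ ℝ) : A ⊗ₖ (-B) = -(A ⊗ₖ B) := by
  ext ⟨a, b⟩ ⟨c, d⟩; simp [Matrix.kroneckerMap_apply]

theorem hr_negk (A : Matrix κ₁ κ₁ ℝ) (B : Matrix κ₂ κ₂ ℝ) : (-A) ⊗ₖ B = -(A ⊗ₖ B) := by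
  ext ⟨a, b⟩ ⟨c, d⟩; simp [Matrix.kroneckerMap_apply]

theorem hr_ksub (A : Matrix κ₁ κ₁ ℝ) (B C : Matrix κ₂ κ₂ ℝ) : A ⊗ₖ (B - C) = A ⊗ₖ B - A ⊗ₖ C := by
  rw [sub_eq_add_neg, Matrix.kronecker_add, hr_kneg, sub_eq_add_neg]

theorem hr_subk (A B : Matrix κ₁ κ₁ ℝ) (C : Matrix κ₂ κ₂ ℝ) : (A - B) ⊗ₖ C = A ⊗ₖ C - B ⊗ₖ C := by
  rw [sub_eq_add_neg, Matrix.add_kronecker, hr_negk, sub_eq_add_neg]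

theorem hr_ext {n m : ℕ} (s t : ℝ) (E : Fin n → Matrix κ₁ κ₁ ℝ) (ω : Matrix κ₂ κ₂ ℝ)
    (G : Fin m → Matrix κ₂ κ₂ ℝ) (hE : HRCl s E) (hωT : ωᵀ = t • ω) (hω : ω * ω = t • 1)
    (hG : HRCl (s * t) G) (hωG : ∀ j, ω * G j = -(G j * ω)) :
    HRCl (s * t) (Fin.append (fun i => E i ⊗ₖ ω) (fun j => (1 : Matrix κ₁ κ₁ ℝ) ⊗ₖ G j)) := by
  constructor
  · intro i
    refine Fin.addCases (fun i => ?_) (fun j => ?_) i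
    · rw [Fin.append_left, hr_kT, hE.1, hωT, Matrix.smul_kronecker, Matrix.kronecker_smul, smul_smul]
    · rw [Fin.append_right, hr_kT, hG.1, Matrix.kronecker_smul, transpose_one]
  · intro i j
    refine Fin.addCases (fun i => ?_) (fun i => ?_) i <;>
      refine Fin.addCases (fun j => ?_) (fun j => ?_) j
    · rw [Fin.append_left, Fin.append_left, ← Matrix.mul_kronecker_mul, ← Matrix.mul_kronecker_mul,
        ← Matrix.add_kronecker, hE.2, hω]
      by_cases h : i = j
      · subst h
        simp [Matrix.smul_kronecker, Matrix.kronecker_smul, smul_smul]; ring_nf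
      · rw [if_neg h, if_neg (by simpa [Fin.ext_iff] using h), Matrix.zero_kronecker]
    · rw [Fin.append_left, Fin.append_right, ← Matrix.mul_kronecker_mul, ← Matrix.mul_kronecker_mul,
        hωG, hr_kneg, mul_one, one_mul, if_neg, neg_add_cancel]
      simp [Fin.ext_iff]; omega
    · rw [Fin.append_left, Fin.append_right, ← Matrix.mul_kronecker_mul, ← Matrix.mul_kronecker_mul,
        hωG, hr_kneg, mul_one, one_mul, if_neg, add_neg_cancel]
      simp [Fin.ext_iff]; omega
    · rw [Fin.append_right, Fin.append_right, ← Matrix.mul_kronecker_mul, ← Matrix.mul_kronecker_mul,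
        ← Matrix.kronecker_add, hG.2, mul_one]
      by_cases h : i = j
      · subst h
        simp [Matrix.kronecker_smul]
      · rw [if_neg h, if_neg (by simpa [Fin.ext_iff] using h), Matrix.kronecker_zero]

end

theorem HRCl.comp {n m : ℕ} {κ : Type} [Fintype κ] [DecidableEq κ] {s : ℝ}
    {E : Fin n → Matrix κ κ ℝ} (h : HRCl s E) (g : Fin m → Fin n) (hg : Function.Injective g) :
    HRCl s (fun i => E (g i)) :=
  ⟨fun i => h.1 _, fun i j => by rw [h.2]; simp [hg.eq_iff]⟩

/-- 2x2 -/
def hrZ : Matrix (Fin 2) (Fin 2) ℝ := !![1, 0; 0, -1]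
def hrXX : Matrix (Fin 2) (Fin 2) ℝ := !![0, 1; 1, 0]
def hrY : Matrix (Fin 2) (Fin 2) ℝ := !![0, 1; -1, 0]

theorem hrZT : hrZᵀ = hrZ := by ext i j; fin_cases i <;> fin_cases j <;> simp [hrZ]
theorem hrXT : hrXXᵀ = hrXX := by ext i j; fin_cases i <;> fin_cases j <;> simp [hrXX]
theorem hrYT : hrYᵀ = -hrY := by ext i j; fin_cases i <;> fin_cases j <;> simp [hrY]
theorem hrZZ : hrZ * hrZ = 1 := by ext i j; fin_cases i <;> fin_cases j <;> simp [hrZ, Matrix.mul_apply]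
theorem hrXX2 : hrXX * hrXX = 1 := by ext i j; fin_cases i <;> fin_cases j <;> simp [hrXX, Matrix.mul_apply]
theorem hrYY : hrY * hrY = -1 := by ext i j; fin_cases i <;> fin_cases j <;> simp [hrY, Matrix.mul_apply]
theorem hrXZ : hrXX * hrZ = -(hrZ * hrXX) := by
  ext i j; fin_cases i <;> fin_cases j <;> simp [hrXX, hrZ, Matrix.mul_apply]
theorem hrYZ : hrY * hrZ = -(hrZ * hrY) := by
  ext i j; fin_cases i <;> fin_cases j <;> simp [hrY, hrZ, Matrix.mul_apply]
theorem hrYX : hrY * hrXX = -(hrXX * hrY) := by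
  ext i j; fin_cases i <;> fin_cases j <;> simp [hrXX, hrY, Matrix.mul_apply]

open scoped Kronecker in
theorem hr_exF (n : ℕ) : ∃ (κ : Type) (_ : Fintype κ) (_ : DecidableEq κ) (_ : Nonempty κ)
    (F : Fin n → Matrix κ κ ℝ), HRCl 1 F := by
  induction n with
  | zero => exact ⟨Unit, inferInstance, inferInstance, inferInstance, fun _ => 1, fun i => i.elim0, fun i => i.elim0⟩
  | succ n ih =>
    obtain ⟨κ, _, _, _, F, hF⟩ := ih
    have := hr_ext 1 1 F hrXX (fun _ : Fin 1 => hrZ) hF (by simp [hrXT]) (by simp [hrXX2]) ?_ ?_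
    · rw [one_mul] at this
      exact ⟨κ × Fin 2, inferInstance, inferInstance, inferInstance, _, this⟩
    · refine ⟨fun i => by simp [hrZT], fun i j => ?_⟩
      rw [if_pos (Subsingleton.elim _ _), hrZZ]; module
    · intro j; exact hrXZ

open scoped Kronecker in
theorem hr_exg (n : ℕ) : ∃ (κ : Type) (_ : Fintype κ) (_ : DecidableEq κ) (_ : Nonempty κ)
    (p : κ → ℝ) (g : Fin n → Matrix κ κ ℝ), HRCl 1 g ∧ (∀ j, p j = 1 ∨ p j = -1) ∧
      ∀ i, g i * diagonal p = -(diagonal p * g i) := by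
  obtain ⟨κ, _, _, _, F, hF⟩ := hr_exF n
  refine ⟨κ × Fin 2, inferInstance, inferInstance, inferInstance,
    fun j => ![1, -1] j.2, fun i => F i ⊗ₖ hrXX, ⟨?_, ?_⟩, ?_, ?_⟩
  · intro i; rw [hr_kT, hF.1, hrXT, Matrix.smul_kronecker]
  · intro i j
    rw [← Matrix.mul_kronecker_mul, ← Matrix.mul_kronecker_mul, ← Matrix.add_kronecker, hF.2, hrXX2]
    split_ifs <;> simp [Matrix.smul_kronecker]
  · rintro ⟨a, b⟩; fin_cases b <;> simp
  · intro i
    have : (diagonal fun j : κ × Fin 2 => (![1, -1] j.2 : ℝ)) = (1 : Matrix κ κ ℝ) ⊗ₖ hrZ := by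
      have h : hrZ = diagonal ![1, -1] := by
        ext i j; fin_cases i <;> fin_cases j <;> simp [hrZ]
      rw [h, ← Matrix.diagonal_one, Matrix.diagonal_kronecker_diagonal]; simp
    rw [this, ← Matrix.mul_kronecker_mul, ← Matrix.mul_kronecker_mul, hrXZ, hr_kneg, one_mul, mul_one]


section
variable {n : ℕ} {κ κ' : Type} [Fintype κ] [DecidableEq κ] [Fintype κ'] [DecidableEq κ']

theorem hr_dot_nn {ι : Type} [Fintype ι] (w : ι → ℝ) : 0 ≤ w ⬝ᵥ w :=
  Finset.sum_nonneg fun _ _ => mul_self_nonneg _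

theorem hrW_map (α e α' e' : Fin n → Matrix κ κ ℝ) (O : Matrix κ κ ℝ) (s : ℝ)
    (h1 : ∀ i, α' i * O = s • (O * α i)) (h2 : ∀ i, e' i * O = s • (O * e i)) (d : ℕ)
    (y : HRSeq n κ) (hy : y ∈ hrW α e d) : hrMat n O y ∈ hrW α' e' d := by
  have hD : hrD α' e' * hrMat n O = s • (hrMat n O * hrD α e) := by
    have h1' : ∀ i, hrMat n (α' i) * hrMat n O = s • (hrMat n O * hrMat n (α i)) := by
      intro i; rw [← map_mul, h1, map_smul, map_mul]
    have h2' : ∀ i, hrMat n (e' i) * hrMat n O = s • (hrMat n O * hrMat n (e i)) := by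
      intro i; rw [← map_mul, h2, map_smul, map_mul]
    rw [hrD_eq, hrD_eq, add_mul, mul_add, smul_add, Finset.sum_mul, Finset.sum_mul, Finset.mul_sum,
      Finset.mul_sum, Finset.smul_sum, Finset.smul_sum]
    congr 1 <;> refine Finset.sum_congr rfl fun i _ => ?_
    · rw [mul_assoc, hrMat_X, ← mul_assoc, h1', smul_mul_assoc, mul_assoc]
    · rw [mul_assoc, hrMat_P, ← mul_assoc, h2', smul_mul_assoc, mul_assoc]
  rw [hr_mem_W] at hy ⊢
  obtain ⟨y1, y2, y3⟩ := hy
  refine ⟨?_, ?_, ?_⟩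
  · obtain ⟨C, hC, h⟩ := hr_mat_bound O
    refine Summable.of_nonneg_of_le (fun a => ?_) (fun a => ?_) (y1.mul_left C)
    · exact hr_dot_nn _
    · exact h _
  · intro a ha; rw [hrMat_apply, y2 a ha, mulVec_zero]
  · intro a ha hd
    rw [← Module.End.mul_apply, hD, LinearMap.smul_apply, Module.End.mul_apply, Pi.smul_apply,
      hrMat_apply, y3 a ha hd, mulVec_zero, smul_zero]

noncomputable def hrWmap (α e α' e' : Fin n → Matrix κ κ ℝ) (O : Matrix κ κ ℝ) (s : ℝ)
    (h1 : ∀ i, α' i * O = s • (O * α i)) (h2 : ∀ i, e' i * O = s • (O * e i)) (d : ℕ) :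
    hrW α e d →ₗ[ℝ] hrW α' e' d :=
  (hrMat n O).restrict (hrW_map α e α' e' O s h1 h2 d)

theorem hrWmap_coe (α e α' e' : Fin n → Matrix κ κ ℝ) (O : Matrix κ κ ℝ) (s : ℝ) (h1 h2) (d : ℕ)
    (y : hrW α e d) : (hrWmap α e α' e' O s h1 h2 d y : HRSeq n κ) = hrMat n O y := rfl

/-- slots -/
def hrSlot (n : ℕ) (κ : Type) (j : κ') : HRSeq n (κ' × κ) →ₗ[ℝ] HRSeq n κ where
  toFun y a k := y a (j, k)
  map_add' _ _ := rfl
  map_smul' _ _ := rfl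

theorem hrSlot_lo (i : Fin n) (j : κ') (y : HRSeq n (κ' × κ)) :
    hrSlot n κ j (hrLo _ i y) = hrLo κ i (hrSlot n κ j y) := rfl
theorem hrSlot_hi (i : Fin n) (j : κ') (y : HRSeq n (κ' × κ)) :
    hrSlot n κ j (hrHi _ i y) = hrHi κ i (hrSlot n κ j y) := rfl

open scoped Kronecker in
theorem hrSlot_mat (p : κ' → ℝ) (B : Matrix κ κ ℝ) (j : κ') (y : HRSeq n (κ' × κ)) :
    hrSlot n κ j (hrMat n (diagonal p ⊗ₖ B) y) = hrMat n (p j • B) (hrSlot n κ j y) := by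
  funext a k
  rw [hrMat_apply]
  change ((diagonal p ⊗ₖ B) *ᵥ y a) (j, k) = _
  simp only [mulVec, dotProduct, Fintype.sum_prod_type, Matrix.kroneckerMap_apply, Matrix.smul_apply]
  rw [Finset.sum_eq_single j]
  · simp [hrSlot]
  · intro b _ hb; simp [diagonal_apply_ne _ (Ne.symm hb)]
  · simp

open scoped Kronecker in
theorem hrSlot_D (p : κ' → ℝ) (α e : Fin n → Matrix κ κ ℝ) (j : κ') (y : HRSeq n (κ' × κ)) :
    hrSlot n κ j (hrD (fun i => diagonal p ⊗ₖ α i) (fun i => (1 : Matrix κ' κ' ℝ) ⊗ₖ e i) y) =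
      hrD (fun i => p j • α i) e (hrSlot n κ j y) := by
  have hm := fun (B : Matrix κ κ ℝ) (y : HRSeq n (κ' × κ)) => hrSlot_mat (fun _ : κ' => 1) B j y
  simp only [diagonal_one, one_smul] at hm
  rw [hrD_eq, hrD_eq]
  simp only [LinearMap.add_apply, LinearMap.sum_apply, Module.End.mul_apply, map_add, map_sum,
    hrSlot_mat, hm]
  rfl

open scoped Kronecker in
theorem hrSlot_W (p : κ' → ℝ) (α e : Fin n → Matrix κ κ ℝ) (d : ℕ) (y : HRSeq n (κ' × κ)) :
    y ∈ hrW (fun i => diagonal p ⊗ₖ α i) (fun i => (1 : Matrix κ' κ' ℝ) ⊗ₖ e i) d ↔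
      ∀ j, hrSlot n κ j y ∈ hrW (fun i => p j • α i) e d := by
  simp only [hr_mem_W]
  have hdot : ∀ a, y a ⬝ᵥ y a = ∑ j, (hrSlot n κ j y a ⬝ᵥ hrSlot n κ j y a) := by
    intro a; simp only [dotProduct, Fintype.sum_prod_type]; rfl
  have key : ∀ z : HRSeq n (κ' × κ), ∀ a, z a = 0 ↔ ∀ j, hrSlot n κ j z a = 0 := by
    intro z a
    constructor
    · intro h j; funext k; exact congrFun h (j, k)
    · intro h; funext ⟨j, k⟩; exact congrFun (h j) k
  constructor
  · rintro ⟨h1, h2, h3⟩ j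
    refine ⟨?_, fun a ha => (key _ _).1 (h2 a ha) j, fun a ha hd => ?_⟩
    · refine Summable.of_nonneg_of_le (fun a => hr_dot_nn _) (fun a => ?_) h1
      rw [hdot]
      exact Finset.single_le_sum (f := fun j => (hrSlot n κ j y a ⬝ᵥ hrSlot n κ j y a))
        (fun j _ => hr_dot_nn _) (Finset.mem_univ j)
    · rw [← hrSlot_D p α e j y]; exact (key _ _).1 (h3 a ha hd) j
  · intro h
    refine ⟨?_, fun a ha => (key _ _).2 fun j => (h j).2.1 a ha, fun a ha hd => (key _ _).2 fun j => ?_⟩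
    · simp only [hdot]
      exact summable_sum fun j _ => (h j).1
    · rw [hrSlot_D p α e j y]; exact (h j).2.2 a ha hd

open scoped Kronecker in
noncomputable def hrSlotEquiv (p : κ' → ℝ) (α e : Fin n → Matrix κ κ ℝ) (d : ℕ) :
    hrW (fun i => diagonal p ⊗ₖ α i) (fun i => (1 : Matrix κ' κ' ℝ) ⊗ₖ e i) d ≃ₗ[ℝ]
      ((j : κ') → hrW (fun i => p j • α i) e d) where
  toFun y j := ⟨hrSlot n κ j y, (hrSlot_W p α e d y).1 y.2 j⟩
  map_add' _ _ := rfl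
  map_smul' _ _ := rfl
  invFun z := ⟨fun a jk => (z jk.1 : HRSeq n κ) a jk.2, (hrSlot_W p α e d _).2 fun j => (z j).2⟩
  left_inv _ := rfl
  right_inv _ := rfl

/-- sign flip -/
noncomputable def hrWneg (α e : Fin n → Matrix κ κ ℝ) (ε : Matrix κ κ ℝ) (η : ℝ) (hη : η * η = 1)
    (hε : ε * ε = η • 1) (hεα : ∀ i, α i * ε = ε * α i) (hεe : ∀ i, e i * ε = -(ε * e i)) (d : ℕ) :
    hrW (fun i => -α i) e d ≃ₗ[ℝ] hrW α e d :=
  LinearEquiv.ofLinearMap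
    (hrWmap (fun i => -α i) e α e ε (-1) (fun i => by simp [hεα]) (fun i => by simp [hεe]) d)
    (hrWmap α e (fun i => -α i) e (η • ε) (-1) (fun i => by simp [hεα]) (fun i => by simp [hεe]) d)
    (by
      ext1 y; apply Subtype.ext
      simp only [LinearMap.comp_apply, hrWmap_coe, LinearMap.id_apply]
      rw [← Module.End.mul_apply, ← map_mul, mul_smul_comm, hε, smul_smul, hη, one_smul, map_one]; rfl)
    (by
      ext1 y; apply Subtype.ext
      simp only [LinearMap.comp_apply, hrWmap_coe, LinearMap.id_apply]
      rw [← Module.End.mul_apply, ← map_mul, smul_mul_assoc, hε, smul_smul, hη, one_smul, map_one]; rfl)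

theorem hr_quat (V : Type) [AddCommGroup V] [Module ℝ V] [Module.Finite ℝ V] (I J : Module.End ℝ V)
    (hI : I * I = -1) (hJ : J * J = -1) (hIJ : I * J = -(J * I)) : 4 ∣ Module.finrank ℝ V := by
  let b : QuaternionAlgebra.Basis (Module.End ℝ V) (-1 : ℝ) 0 (-1) :=
    { i := I, j := J, k := I * J, i_mul_i := by simp [hI], j_mul_j := by simp [hJ],
      i_mul_j := rfl, j_mul_i := by simp [hIJ] }
  let φ : Quaternion ℝ →ₐ[ℝ] Module.End ℝ V := b.liftHom
  let _ : Module (Quaternion ℝ) V := Module.compHom V φ.toRingHom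
  have : IsScalarTower ℝ (Quaternion ℝ) V := ⟨fun r q v => by
    change φ (r • q) v = r • φ q v
    rw [map_smul]; rfl⟩
  have := Module.finrank_mul_finrank ℝ (Quaternion ℝ) V
  rw [Quaternion.finrank_eq_four] at this
  exact ⟨_, this.symm⟩

theorem hrW_quat (α e : Fin n → Matrix κ κ ℝ) (I J : Matrix κ κ ℝ) (hI : I * I = -1) (hJ : J * J = -1)
    (hIJ : I * J = -(J * I)) (hαI : ∀ i, α i * I = I * α i) (hαJ : ∀ i, α i * J = J * α i)
    (heI : ∀ i, e i * I = I * e i) (heJ : ∀ i, e i * J = J * e i) (d : ℕ)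
    [Module.Finite ℝ (hrW α e d)] : 4 ∣ Module.finrank ℝ (hrW α e d) := by
  refine hr_quat _ (hrWmap α e α e I 1 (fun i => by simp [hαI]) (fun i => by simp [heI]) d)
    (hrWmap α e α e J 1 (fun i => by simp [hαJ]) (fun i => by simp [heJ]) d) ?_ ?_ ?_
  · ext1 y; apply Subtype.ext
    rw [Module.End.mul_apply, hrWmap_coe, hrWmap_coe, ← Module.End.mul_apply, ← map_mul, hI, map_neg,
      map_one]; rfl
  · ext1 y; apply Subtype.ext
    rw [Module.End.mul_apply, hrWmap_coe, hrWmap_coe, ← Module.End.mul_apply, ← map_mul, hJ, map_neg,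
      map_one]; rfl
  · ext1 y; apply Subtype.ext
    rw [Module.End.mul_apply, hrWmap_coe, hrWmap_coe, ← Module.End.mul_apply, ← map_mul, hIJ, map_neg,
      map_mul]; rfl
end


section
variable {n : ℕ} {κ : Type} [Fintype κ] [DecidableEq κ]

open scoped Kronecker in
theorem hr_index (a e : Fin n → Matrix κ κ ℝ) (ε : Matrix κ κ ℝ) (η : ℝ) (hη : η * η = 1)
    (ha : ∀ i, (a i)ᵀ = η • a i) (he : ∀ i, (e i)ᵀ = -(η • e i))
    (hae : ∀ i j, a i * e j = -(e j * a i))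
    (hee : ∀ i j, e i * e j + e j * e i = if i = j then (2 * (-η)) • 1 else 0)
    (hεT : εᵀ = η • ε) (hε : ε * ε = η • 1) (hεa : ∀ i, a i * ε = ε * a i)
    (hεe : ∀ i, e i * ε = -(ε * e i)) (c₀ : ℝ) (hc₀ : 0 < c₀)
    (hell : ∀ v : Fin n → ℝ, (η • ((∑ i, v i • a i) * (∑ i, v i • a i)) -
      (c₀ * ∑ i, v i ^ 2) • (1 : Matrix κ κ ℝ)).PosSemidef) :
    ∃ d, Module.Finite ℝ (hrW a e d) ∧ ∃ cnt : ℕ, 2 ^ n * Module.finrank ℝ (hrW a e d) +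
      Fintype.card κ = 2 ^ n * cnt * Fintype.card κ := by
  obtain ⟨κ', _, _, _, p, g, hg, hp, hgp⟩ := hr_exg n
  set P : Matrix κ' κ' ℝ := diagonal p with hP
  have hPP : P * P = 1 := by
    rw [hP, diagonal_mul_diagonal, ← diagonal_one]; congr 1; funext j
    rcases hp j with h | h <;> simp [h]
  have hPT : Pᵀ = P := by simp [hP]
  set α₀ : Fin n → Matrix (κ' × κ) (κ' × κ) ℝ := fun i => P ⊗ₖ a i with hα₀d
  set α₁ : Fin n → Matrix (κ' × κ) (κ' × κ) ℝ := fun i => g i ⊗ₖ ε with hα₁d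
  set e' : Fin n → Matrix (κ' × κ) (κ' × κ) ℝ := fun i => (1 : Matrix κ' κ' ℝ) ⊗ₖ e i with he'd
  have hα₀ : ∀ i, (α₀ i)ᵀ = η • α₀ i := by
    intro i; simp only [hα₀d]; rw [hr_kT, hPT, ha, Matrix.kronecker_smul]
  have hα₁ : ∀ i, (α₁ i)ᵀ = η • α₁ i := by
    intro i; simp only [hα₁d]; rw [hr_kT, hg.1, hεT, Matrix.kronecker_smul, one_smul]
  have he' : ∀ i, (e' i)ᵀ = -(η • e' i) := by
    intro i; simp only [he'd]; rw [hr_kT, he, transpose_one, hr_kneg, Matrix.kronecker_smul]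
  have hαe₀ : ∀ i j, α₀ i * e' j = -(e' j * α₀ i) := by
    intro i j; simp only [hα₀d, he'd]
    rw [← Matrix.mul_kronecker_mul, ← Matrix.mul_kronecker_mul, hae, hr_kneg, mul_one, one_mul]
  have hαe₁ : ∀ i j, α₁ i * e' j = -(e' j * α₁ i) := by
    intro i j; simp only [hα₁d, he'd]
    rw [← Matrix.mul_kronecker_mul, ← Matrix.mul_kronecker_mul, hεe, hr_kneg, mul_one, one_mul, neg_neg]
  have hee' : ∀ i j, e' i * e' j + e' j * e' i = if i = j then (2 * (-η)) • 1 else 0 := by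
    intro i j; simp only [he'd]
    rw [← Matrix.mul_kronecker_mul, ← Matrix.mul_kronecker_mul, ← Matrix.kronecker_add, hee]
    split_ifs <;> simp [Matrix.kronecker_smul, hr_kneg]
  have hαα : ∀ i j, α₁ i * α₁ j + α₁ j * α₁ i = if i = j then (2 * η) • 1 else 0 := by
    intro i j; simp only [hα₁d]
    rw [← Matrix.mul_kronecker_mul, ← Matrix.mul_kronecker_mul, ← Matrix.add_kronecker, hg.2, hε]
    split_ifs <;> simp [Matrix.kronecker_smul, Matrix.smul_kronecker, smul_smul, mul_comm]
  have hα01 : ∀ i j, α₀ i * α₁ j = -(α₁ j * α₀ i) := by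
    intro i j; simp only [hα₀d, hα₁d]
    rw [← Matrix.mul_kronecker_mul, ← Matrix.mul_kronecker_mul, hgp, hεa, hr_negk, neg_neg]
  set c : ℝ := min c₀ 1 / 2 with hcd
  have hm : 0 < min c₀ 1 := lt_min hc₀ one_pos
  have hc : 0 < c := by positivity
  have hc1 : c ≤ 1 := by have := min_le_right c₀ 1; rw [hcd]; linarith
  have hsc : ∀ t : ℝ, c ≤ (1 - t) ^ 2 * c₀ + t ^ 2 := by
    intro t
    have h1 := min_le_left c₀ 1
    have h2 := min_le_right c₀ 1
    have h3 : min c₀ 1 * (1 - t) ^ 2 ≤ c₀ * (1 - t) ^ 2 := by gcongr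
    have h4 : min c₀ 1 * t ^ 2 ≤ 1 * t ^ 2 := by gcongr
    have h5 : min c₀ 1 * (1/2) ≤ min c₀ 1 * ((1 - t) ^ 2 + t ^ 2) := by
      gcongr; nlinarith [sq_nonneg (1 - 2 * t)]
    rw [hcd]; nlinarith
  have hE : ∀ t : ℝ, 0 ≤ t → t ≤ 1 → ∀ (v : Fin n → ℝ) (w : κ' × κ → ℝ), c * (∑ i, v i ^ 2) * (w ⬝ᵥ w) ≤
      ((∑ i, v i • ((1 - t) • α₀ i + t • α₁ i)) *ᵥ w) ⬝ᵥ
      ((∑ i, v i • ((1 - t) • α₀ i + t • α₁ i)) *ᵥ w) := by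
    intro t _ _ v w
    set F := ∑ i, v i • α₀ i with hF
    set G := ∑ i, v i • α₁ i with hG
    have hM : (∑ i, v i • ((1 - t) • α₀ i + t • α₁ i)) = (1 - t) • F + t • G := by
      rw [hF, hG, Finset.smul_sum, Finset.smul_sum, ← Finset.sum_add_distrib]
      refine Finset.sum_congr rfl fun i _ => ?_
      module
    rw [hM]
    have hFT : Fᵀ = η • F := by
      rw [hF, transpose_sum, Finset.smul_sum]
      refine Finset.sum_congr rfl fun i _ => ?_
      rw [transpose_smul, hα₀, smul_comm]
    have hGT : Gᵀ = η • G := by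
      rw [hG, transpose_sum, Finset.smul_sum]
      refine Finset.sum_congr rfl fun i _ => ?_
      rw [transpose_smul, hα₁, smul_comm]
    have hFG : F * G = -(G * F) := by
      rw [hF, hG, Finset.sum_mul_sum, Finset.sum_mul_sum, Finset.sum_comm, ← Finset.sum_neg_distrib]
      refine Finset.sum_congr rfl fun i _ => ?_
      rw [← Finset.sum_neg_distrib]
      refine Finset.sum_congr rfl fun j _ => ?_
      rw [smul_mul_smul_comm, smul_mul_smul_comm, hα01, mul_comm, smul_neg]
    have hGG : G * G = (η * ∑ i, v i ^ 2) • 1 := by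
      have h2 : (2:ℝ) • (G * G) = (2:ℝ) • ((η * ∑ i, v i ^ 2) • 1) := by
        have h3 : G * G = ∑ i, ∑ j, (v i * v j) • (α₁ i * α₁ j) := by
          rw [hG, Finset.sum_mul_sum]
          simp only [smul_mul_smul_comm]
        have h4 : G * G = ∑ i, ∑ j, (v i * v j) • (α₁ j * α₁ i) := by
          rw [h3, Finset.sum_comm]
          simp only [mul_comm (v _) (v _)]
        rw [two_smul]
        nth_rewrite 1 [h3]
        rw [h4, ← Finset.sum_add_distrib]
        simp only [← Finset.sum_add_distrib, ← smul_add, hαα, smul_ite, smul_zero,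
          Finset.sum_ite_eq, Finset.mem_univ, if_true, smul_smul, ← Finset.sum_smul]
        congr 1
        rw [Finset.mul_sum, Finset.mul_sum]
        refine Finset.sum_congr rfl fun i _ => by ring
      exact smul_right_injective _ (two_ne_zero) h2
    have hFk : F = P ⊗ₖ (∑ i, v i • a i) := by
      rw [hF]
      ext ⟨x, y⟩ ⟨z, u⟩
      simp [hα₀d, Matrix.kroneckerMap_apply, Matrix.sum_apply, Finset.mul_sum]
      refine Finset.sum_congr rfl fun i _ => by ring
    have hFF : F * F = (1 : Matrix κ' κ' ℝ) ⊗ₖ ((∑ i, v i • a i) * (∑ i, v i • a i)) := by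
      rw [hFk, ← Matrix.mul_kronecker_mul, hPP]
    set M := (1 - t) • F + t • G with hMd
    have hMT : Mᵀ = η • M := by
      rw [hMd, transpose_add, transpose_smul, transpose_smul, hFT, hGT]; module
    have hMM : M * M = (1 - t) ^ 2 • (F * F) + t ^ 2 • (G * G) := by
      rw [hMd, add_mul, mul_add, mul_add]
      simp only [smul_mul_smul_comm, hFG]
      module
    have hnorm : (M *ᵥ w) ⬝ᵥ (M *ᵥ w) = w ⬝ᵥ ((η • (M * M)) *ᵥ w) := by
      rw [dotProduct_mulVec, vecMul_mulVec, hMT, smul_mul_assoc, ← mulVec_transpose, dotProduct_comm,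
        transpose_smul, transpose_mul, hMT]
      simp only [smul_mul_smul_comm, hη, one_smul]
    rw [hnorm]
    have hps := ((Matrix.PosSemidef.one (n := κ') (R := ℝ)).kronecker (hell v))
    have hq := (posSemidef_iff_dotProduct_mulVec.1 hps).2 w
    have hid : η • (M * M) = (1 - t) ^ 2 • ((1 : Matrix κ' κ' ℝ) ⊗ₖ (η • ((∑ i, v i • a i) * (∑ i, v i • a i)) -
      (c₀ * ∑ i, v i ^ 2) • (1 : Matrix κ κ ℝ))) + (((1 - t) ^ 2 * c₀ + t ^ 2) * ∑ i, v i ^ 2) • 1 := by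
      rw [hMM, hFF, hGG, hr_ksub, Matrix.kronecker_smul,
        Matrix.kronecker_smul, Matrix.one_kronecker_one]
      have : η • t ^ 2 • (η * ∑ i, v i ^ 2) • (1 : Matrix (κ' × κ) (κ' × κ) ℝ) =
          (t ^ 2 * ∑ i, v i ^ 2) • 1 := by
        rw [smul_smul, smul_smul]; congr 1
        linear_combination (t ^ 2 * ∑ i, v i ^ 2) * hη
      rw [smul_add, this]
      module
    rw [hid, add_mulVec, smul_mulVec, smul_mulVec, one_mulVec, dotProduct_add, dotProduct_smul, dotProduct_smul]
    simp only [star_trivial] at hq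
    simp only [smul_eq_mul]
    have hv : 0 ≤ ∑ i, v i ^ 2 := Finset.sum_nonneg fun _ _ => sq_nonneg _
    have hw := hr_dot_nn w
    have h1 : c * (∑ i, v i ^ 2) * (w ⬝ᵥ w) ≤ ((1 - t) ^ 2 * c₀ + t ^ 2) * (∑ i, v i ^ 2) * (w ⬝ᵥ w) := by
      gcongr; exact hsc t
    have h2 := mul_nonneg (sq_nonneg (1 - t)) hq
    linarith
  obtain ⟨d, hd⟩ := hr_homotopy α₀ α₁ e' η hη hα₀ hα₁ he' hαe₀ hαe₁ hee' c hc hc1 hE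
  obtain ⟨hfin, cnt, k, h1, h2⟩ := hr_clifford_rank α₁ e' η hη hα₁ he' hαe₁ hαα hee' d
  have hfin0 : Module.Finite ℝ (hrW α₀ e' d) := by
    rw [← Module.rank_lt_aleph0_iff] at hfin ⊢
    rwa [hd]
  have hfr : Module.finrank ℝ (hrW α₀ e' d) = Module.finrank ℝ (hrW α₁ e' d) := by
    rw [Module.finrank, hd]; rfl
  have sl := hrSlotEquiv p a e d
  have hj : ∀ j, Nonempty (hrW (fun i => p j • a i) e d ≃ₗ[ℝ] hrW a e d) := by
    intro j
    rcases hp j with h | h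
    · have h' : (fun i => p j • a i) = a := by funext i; rw [h, one_smul]
      rw [h']; exact ⟨LinearEquiv.refl _ _⟩
    · have h' : (fun i => p j • a i) = fun i => -a i := by funext i; rw [h, neg_smul, one_smul]
      rw [h']
      exact ⟨hrWneg a e ε η hη hε hεa hεe d⟩
  have sl2 : hrW α₀ e' d ≃ₗ[ℝ] (κ' → hrW a e d) :=
    sl.trans (LinearEquiv.piCongrRight fun j => (hj j).some)
  have hfin' : Module.Finite ℝ (κ' → hrW a e d) := Module.Finite.equiv sl2
  have hfina : Module.Finite ℝ (hrW a e d) := by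
    refine Module.Finite.of_surjective (LinearMap.proj (R := ℝ) (φ := fun _ : κ' => hrW a e d)
      (Classical.arbitrary κ')) ?_
    intro x; exact ⟨fun _ => x, rfl⟩
  refine ⟨d, hfina, cnt, ?_⟩
  have h3 : Module.finrank ℝ (hrW α₁ e' d) = Fintype.card κ' * Module.finrank ℝ (hrW a e d) := by
    rw [← hfr, LinearEquiv.finrank_eq sl2, Module.finrank_pi_fintype]; simp
  rw [h3, Fintype.card_prod] at h1
  rw [Fintype.card_prod] at h2
  have hpos : 0 < Fintype.card κ' := Fintype.card_pos
  apply Nat.eq_of_mul_eq_mul_left hpos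
  calc _ = 2 ^ n * (Fintype.card κ' * Module.finrank ℝ (hrW a e d)) + Fintype.card κ' * Fintype.card κ := by ring
    _ = 2 ^ n * (Fintype.card κ' * Module.finrank ℝ (hrW a e d) + k) := by rw [← h2]; ring
    _ = _ := by rw [h1]; ring

open scoped Kronecker in
theorem hr_star {N : ℕ} {σ : Type} [Fintype σ] [DecidableEq σ] (A : Fin n → Matrix (Fin N) (Fin N) ℝ)
    (hA : ∀ i, (A i)ᵀ = A i) (c₀ : ℝ) (hc₀ : 0 < c₀)
    (hell : ∀ v : Fin n → ℝ, ((∑ i, v i • A i) * (∑ i, v i • A i) -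
      (c₀ * ∑ i, v i ^ 2) • (1 : Matrix (Fin N) (Fin N) ℝ)).PosSemidef)
    (e : Fin n → Matrix σ σ ℝ) (ε : Matrix σ σ ℝ) (η : ℝ) (hη : η * η = 1)
    (he : HRCl (-η) e) (hεT : εᵀ = η • ε) (hε : ε * ε = η • 1) (hεe : ∀ i, ε * e i = -(e i * ε)) :
    ∃ c cnt : ℕ, 2 ^ n * c + N * Fintype.card σ = 2 ^ n * cnt * (N * Fintype.card σ) ∧
      ∀ I J : Matrix σ σ ℝ, I * I = -1 → J * J = -1 → I * J = -(J * I) → ε * I = I * ε →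
        ε * J = J * ε → (∀ i, e i * I = I * e i) → (∀ i, e i * J = J * e i) → 4 ∣ c := by
  have H := hr_index (fun i => A i ⊗ₖ ε)
    (fun i => (1 : Matrix (Fin N) (Fin N) ℝ) ⊗ₖ e i) ((1 : Matrix (Fin N) (Fin N) ℝ) ⊗ₖ ε) η hη ?_ ?_ ?_ ?_ ?_ ?_ ?_ ?_ c₀ hc₀ ?_
  · obtain ⟨d, hf, cnt, h⟩ := H
    refine ⟨Module.finrank ℝ (hrW (fun i => A i ⊗ₖ ε)
      (fun i => (1 : Matrix (Fin N) (Fin N) ℝ) ⊗ₖ e i) d), cnt, ?_, ?_⟩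
    · rw [Fintype.card_prod, Fintype.card_fin] at h; exact h
    · intro I J hI hJ hIJ hεI hεJ heI heJ
      refine hrW_quat _ _ ((1 : Matrix (Fin N) (Fin N) ℝ) ⊗ₖ I) ((1 : Matrix (Fin N) (Fin N) ℝ) ⊗ₖ J)
        ?_ ?_ ?_ ?_ ?_ ?_ ?_ d
      all_goals (try intro i)
      all_goals simp only [← Matrix.mul_kronecker_mul, mul_one, one_mul, hI, hJ, hIJ, hεI, hεJ, heI, heJ,
        hr_kneg, Matrix.one_kronecker_one]
  · intro i; rw [hr_kT, hA, hεT, Matrix.kronecker_smul]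
  · intro i; rw [hr_kT, he.1, transpose_one, Matrix.kronecker_smul, neg_smul]
  · intro i j
    rw [← Matrix.mul_kronecker_mul, ← Matrix.mul_kronecker_mul, hεe, hr_kneg, one_mul, mul_one]
  · intro i j
    rw [← Matrix.mul_kronecker_mul, ← Matrix.mul_kronecker_mul, ← Matrix.kronecker_add, he.2]
    split_ifs <;> simp [Matrix.kronecker_smul, hr_kneg]
  · rw [hr_kT, transpose_one, hεT, Matrix.kronecker_smul]
  · rw [← Matrix.mul_kronecker_mul, hε, one_mul, Matrix.kronecker_smul, Matrix.one_kronecker_one]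
  · intro i; simp only [← Matrix.mul_kronecker_mul, one_mul, mul_one]
  · intro i; simp only [← Matrix.mul_kronecker_mul, one_mul, mul_one, hεe, hr_kneg, neg_neg]
  · intro v
    have h1 : (∑ i, v i • (A i ⊗ₖ ε)) = (∑ i, v i • A i) ⊗ₖ ε := by
      ext ⟨x, y⟩ ⟨z, u⟩
      simp [Matrix.kroneckerMap_apply, Matrix.sum_apply, Finset.sum_mul]
      refine Finset.sum_congr rfl fun i _ => by ring
    have := (hell v).kronecker (Matrix.PosSemidef.one (n := σ) (R := ℝ))
    rw [hr_subk, Matrix.smul_kronecker, Matrix.one_kronecker_one] at this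
    rw [h1, ← Matrix.mul_kronecker_mul, hε, Matrix.kronecker_smul, smul_smul, hη, one_smul]
    exact this
end


section
open scoped Kronecker
variable {κ : Type} [Fintype κ] [DecidableEq κ]

theorem hr_append {n m : ℕ} (s : ℝ) (E : Fin n → Matrix κ κ ℝ) (G : Fin m → Matrix κ κ ℝ)
    (hE : HRCl s E) (hG : HRCl s G) (h : ∀ i j, E i * G j = -(G j * E i)) : HRCl s (Fin.append E G) := by
  constructor
  · intro i
    refine Fin.addCases (fun i => ?_) (fun j => ?_) i
    · rw [Fin.append_left, hE.1]
    · rw [Fin.append_right, hG.1]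
  · intro i j
    refine Fin.addCases (fun i => ?_) (fun i => ?_) i <;>
      refine Fin.addCases (fun j => ?_) (fun j => ?_) j
    · rw [Fin.append_left, Fin.append_left, hE.2]; simp
    · rw [Fin.append_left, Fin.append_right, h, if_neg, neg_add_cancel]
      simp [Fin.ext_iff]; omega
    · rw [Fin.append_left, Fin.append_right, h, if_neg, add_neg_cancel]
      simp [Fin.ext_iff]; omega
    · rw [Fin.append_right, Fin.append_right, hG.2]; simp

theorem hr_single (s : ℝ) (B : Matrix κ κ ℝ) (h1 : Bᵀ = s • B) (h2 : B * B = s • 1) :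
    HRCl s (fun _ : Fin 1 => B) :=
  ⟨fun _ => h1, fun i j => by rw [if_pos (Subsingleton.elim _ _), h2]; module⟩

theorem hr_pair (s : ℝ) (B C : Matrix κ κ ℝ) (h1 : Bᵀ = s • B) (h2 : B * B = s • 1)
    (h3 : Cᵀ = s • C) (h4 : C * C = s • 1) (h5 : B * C = -(C * B)) :
    HRCl s (Fin.append (fun _ : Fin 1 => B) (fun _ : Fin 1 => C)) :=
  hr_append s _ _ (hr_single s B h1 h2) (hr_single s C h3 h4) fun _ _ => h5

theorem hr_map {κ' : Type} [Fintype κ'] [DecidableEq κ'] {n : ℕ} (s t : ℝ) (E : Fin n → Matrix κ κ ℝ)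
    (hE : HRCl s E) (ω : Matrix κ' κ' ℝ) (h1 : ωᵀ = t • ω) (h2 : ω * ω = t • 1) :
    HRCl (s * t) (fun i => E i ⊗ₖ ω) := by
  constructor
  · intro i; rw [hr_kT, hE.1, h1, Matrix.smul_kronecker, Matrix.kronecker_smul, smul_smul]
  · intro i j
    rw [← Matrix.mul_kronecker_mul, ← Matrix.mul_kronecker_mul, ← Matrix.add_kronecker, hE.2, h2]
    split_ifs
    · simp [Matrix.smul_kronecker, Matrix.kronecker_smul, smul_smul]; ring_nf
    · simp

theorem HRCl.anti {n : ℕ} {s : ℝ} {E : Fin n → Matrix κ κ ℝ} (h : HRCl s E) (i j) (hij : i ≠ j) :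
    E i * E j = -(E j * E i) := by
  have := h.2 i j
  rw [if_neg hij] at this
  exact eq_neg_of_add_eq_zero_left this

theorem HRCl.sq {n : ℕ} {s : ℝ} {E : Fin n → Matrix κ κ ℝ} (h : HRCl s E) (i) :
    E i * E i = s • 1 := by
  have := h.2 i i
  rw [if_pos rfl, ← two_smul ℝ, mul_smul] at this
  exact smul_right_injective _ (two_ne_zero) this

/-- quaternion left and right -/
abbrev HR4 := Fin 2 × Fin 2

theorem hr_LR : ∃ L R : Fin 3 → Matrix HR4 HR4 ℝ, HRCl (-1) L ∧ HRCl (-1) R ∧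
    ∀ i j, L i * R j = R j * L i := by
  have hL := hr_append (-1) (fun _ : Fin 1 => hrY ⊗ₖ (1 : Matrix (Fin 2) (Fin 2) ℝ))
    (Fin.append (fun _ : Fin 1 => hrXX ⊗ₖ hrY) (fun _ : Fin 1 => hrZ ⊗ₖ hrY))
    (hr_single _ _ (by simp [hr_kT, hrYT, hr_negk])
      (by simp [← Matrix.mul_kronecker_mul, hrYY, hr_negk]))
    (hr_pair _ _ _ (by simp [hr_kT, hrYT, hrXT, hr_kneg])
      (by simp [← Matrix.mul_kronecker_mul, hrYY, hrXX2, hr_kneg])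
      (by simp [hr_kT, hrYT, hrZT, hr_kneg])
      (by simp [← Matrix.mul_kronecker_mul, hrYY, hrZZ, hr_kneg])
      (by simp [← Matrix.mul_kronecker_mul, hrYY, hrXZ, hr_kneg, hr_negk]))
    (by
      intro i j
      fin_cases j
      · change hrY ⊗ₖ _ * hrXX ⊗ₖ _ = -(hrXX ⊗ₖ _ * hrY ⊗ₖ _)
        simp [← Matrix.mul_kronecker_mul, hrYX, hr_negk]
      · change hrY ⊗ₖ _ * hrZ ⊗ₖ _ = -(hrZ ⊗ₖ _ * hrY ⊗ₖ _)
        simp [← Matrix.mul_kronecker_mul, hrYZ, hr_negk])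
  have hR := hr_append (-1) (fun _ : Fin 1 => (1 : Matrix (Fin 2) (Fin 2) ℝ) ⊗ₖ hrY)
    (Fin.append (fun _ : Fin 1 => hrY ⊗ₖ hrXX) (fun _ : Fin 1 => hrY ⊗ₖ hrZ))
    (hr_single _ _ (by simp [hr_kT, hrYT, hr_kneg])
      (by simp [← Matrix.mul_kronecker_mul, hrYY, hr_kneg]))
    (hr_pair _ _ _ (by simp [hr_kT, hrYT, hrXT, hr_negk])
      (by simp [← Matrix.mul_kronecker_mul, hrYY, hrXX2, hr_negk])
      (by simp [hr_kT, hrYT, hrZT, hr_negk])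
      (by simp [← Matrix.mul_kronecker_mul, hrYY, hrZZ, hr_negk])
      (by simp [← Matrix.mul_kronecker_mul, hrYY, hrXZ, hr_kneg, hr_negk]))
    (by
      intro i j
      fin_cases j
      · change _ ⊗ₖ hrY * _ ⊗ₖ hrXX = -(_ ⊗ₖ hrXX * _ ⊗ₖ hrY)
        simp [← Matrix.mul_kronecker_mul, hrYX, hr_kneg]
      · change _ ⊗ₖ hrY * _ ⊗ₖ hrZ = -(_ ⊗ₖ hrZ * _ ⊗ₖ hrY)
        simp [← Matrix.mul_kronecker_mul, hrYZ, hr_kneg])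
  refine ⟨_, _, hL, hR, ?_⟩
  intro i j
  refine Fin.addCases (m := 1) (n := 2) (fun i => ?_) (fun i => ?_) i <;>
  refine Fin.addCases (m := 1) (n := 2) (fun j => ?_) (fun j => ?_) j
  · simp only [Fin.append_left, ← Matrix.mul_kronecker_mul, mul_one, one_mul]
  · simp only [Fin.append_left, Fin.append_right]
    refine Fin.addCases (m := 1) (n := 1) (fun j => ?_) (fun j => ?_) j <;>
    simp only [Fin.append_left, Fin.append_right, ← Matrix.mul_kronecker_mul, mul_one, one_mul]
  · simp only [Fin.append_left, Fin.append_right]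
    refine Fin.addCases (m := 1) (n := 1) (fun _ => ?_) (fun _ => ?_) i <;>
    simp only [Fin.append_left, Fin.append_right, ← Matrix.mul_kronecker_mul, mul_one, one_mul]
  · simp only [Fin.append_right]
    refine Fin.addCases (m := 1) (n := 1) (fun _ => ?_) (fun _ => ?_) i <;>
    refine Fin.addCases (m := 1) (n := 1) (fun j => ?_) (fun j => ?_) j <;>
    simp only [Fin.append_left, Fin.append_right, ← Matrix.mul_kronecker_mul, mul_one, one_mul,
      hrYX, hrYZ, hr_negk, hr_kneg, neg_neg]

theorem hr_ZX : HRCl 1 (Fin.append (fun _ : Fin 1 => hrZ) (fun _ : Fin 1 => hrXX)) :=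
  hr_pair 1 _ _ (by simp [hrZT]) (by simp [hrZZ]) (by simp [hrXT]) (by simp [hrXX2])
    (by rw [hrXZ, neg_neg])

theorem hr_ZX_Y (j : Fin 2) : hrY * (Fin.append (fun _ : Fin 1 => hrZ) (fun _ : Fin 1 => hrXX)) j =
    -((Fin.append (fun _ : Fin 1 => hrZ) (fun _ : Fin 1 => hrXX)) j * hrY) := by
  refine Fin.addCases (m := 1) (n := 1) (fun j => ?_) (fun j => ?_) j
  · rw [Fin.append_left, hrYZ]
  · rw [Fin.append_right, hrYX]

theorem hrYs : HRCl (-1) (fun _ : Fin 1 => hrY) := hr_single _ _ (by simp [hrYT]) (by simp [hrYY])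

theorem hr_nine : ∃ B : Fin 9 → Matrix ((HR4 × Fin 2) × Fin 2) ((HR4 × Fin 2) × Fin 2) ℝ, HRCl 1 B := by
  obtain ⟨L, R, hL, hR, hLR⟩ := hr_LR
  have h4 := hr_ext (-1) 1 L hrXX (fun _ : Fin 1 => hrY) hL (by simp [hrXT]) (by simp [hrXX2])
    (by rw [mul_one]; exact hrYs) (fun _ => by rw [hrYX, neg_neg])
  have h3 := hr_map (-1) 1 R hR hrZ (by simp [hrZT]) (by simp [hrZZ])
  have h7 := hr_append _ _ _ h4 h3 (by
    intro i j
    refine Fin.addCases (fun i => ?_) (fun i => ?_) i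
    · rw [Fin.append_left, ← Matrix.mul_kronecker_mul, ← Matrix.mul_kronecker_mul, hLR, hrXZ, hr_kneg]
    · rw [Fin.append_right, ← Matrix.mul_kronecker_mul, ← Matrix.mul_kronecker_mul, hrYZ, hr_kneg,
        one_mul, mul_one])
  have h9 := hr_ext (-1 * 1) (-1) _ hrY _ h7 (by simp [hrYT]) (by simp [hrYY])
    (by norm_num only; exact hr_ZX) hr_ZX_Y
  norm_num only at h9
  exact ⟨_, h9⟩

/-- period data -/
theorem hr_period (s : ℝ) (hs : s = 1 ∨ s = -1) :
    ∃ (ω : Matrix ((HR4 × Fin 2) × Fin 2) ((HR4 × Fin 2) × Fin 2) ℝ) (G : Fin 8 → _),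
      ωᵀ = (1:ℝ) • ω ∧ ω * ω = (1:ℝ) • 1 ∧ HRCl (s * 1) G ∧ ∀ j, ω * G j = -(G j * ω) := by
  obtain ⟨B, hB⟩ := hr_nine
  have hω := hB.sq (Fin.last 8)
  rw [one_smul] at hω
  have hanti : ∀ j : Fin 8, B (Fin.last 8) * B j.castSucc = -(B j.castSucc * B (Fin.last 8)) :=
    fun j => hB.anti _ _ (Fin.castSucc_lt_last j).ne'
  rw [mul_one]
  rcases hs with rfl | rfl
  · exact ⟨B (Fin.last 8), fun j => B j.castSucc, hB.1 _, hB.sq _,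
      hB.comp _ (Fin.castSucc_injective 8), hanti⟩
  · refine ⟨B (Fin.last 8), fun j => B j.castSucc * B (Fin.last 8), hB.1 _, hB.sq _, ⟨?_, ?_⟩, ?_⟩
    · intro j
      rw [transpose_mul, hB.1, hB.1, one_smul, one_smul, hanti, neg_smul, one_smul]
    · have h : ∀ i j : Fin 8, B i.castSucc * B (Fin.last 8) * (B j.castSucc * B (Fin.last 8)) =
          -(B i.castSucc * B j.castSucc) := by
        intro i j
        rw [mul_assoc, ← mul_assoc (B (Fin.last 8)), hanti, neg_mul, mul_assoc, hω, mul_one, mul_neg]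
      intro i j
      rw [h, h, ← neg_add, hB.2]
      simp only [Fin.castSucc_inj]
      split_ifs
      · module
      · simp
    · intro j
      rw [← mul_assoc, hanti, neg_mul]

/-- symmetric Clifford families -/
def HRF (n c : ℕ) : Prop := ∃ (κ : Type) (_ : Fintype κ) (_ : DecidableEq κ) (F : Fin n → Matrix κ κ ℝ),
  Fintype.card κ = c ∧ HRCl 1 F

theorem hrF_step (n c m : ℕ) (h : HRF n c) : HRF (n + 8 * m) (16 ^ m * c) := by
  induction m with
  | zero => simpa using h
  | succ m ih =>
    obtain ⟨κ, _, _, F, hc, hF⟩ := ih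
    obtain ⟨ω, G, h1, h2, h3, h4⟩ := hr_period 1 (Or.inl rfl)
    have := hr_ext 1 1 F ω G hF h1 h2 h3 h4
    rw [mul_one] at this
    refine ⟨κ × ((HR4 × Fin 2) × Fin 2), inferInstance, inferInstance, _, ?_, this⟩
    rw [Fintype.card_prod, hc]
    simp [pow_succ]; ring

theorem hrF_odd (n c o : ℕ) (h : HRF n c) : HRF n (c * o) := by
  obtain ⟨κ, _, _, F, hc, hF⟩ := h
  have := hr_map 1 1 F hF (1 : Matrix (Fin o) (Fin o) ℝ) (by simp) (by simp)
  rw [mul_one] at this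
  exact ⟨κ × Fin o, inferInstance, inferInstance, _, by simp [hc], this⟩

theorem hrF_mono (n m c : ℕ) (h : HRF n c) (hm : m ≤ n) : HRF m c := by
  obtain ⟨κ, _, _, F, hc, hF⟩ := h
  exact ⟨κ, inferInstance, inferInstance, _, hc, hF.comp (Fin.castLE hm) (Fin.castLE_injective hm)⟩

theorem hrF_1 : HRF 1 1 :=
  ⟨Unit, inferInstance, inferInstance, _, by simp, hr_single 1 (1 : Matrix Unit Unit ℝ) (by simp) (by simp)⟩

theorem hrF_2 : HRF 2 2 := ⟨Fin 2, inferInstance, inferInstance, _, by simp, hr_ZX⟩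

theorem hrF_3 : HRF 3 4 := by
  have := hr_ext (-1) (-1) _ hrY _ hrYs (by simp [hrYT]) (by simp [hrYY])
    (by norm_num only; exact hr_ZX) hr_ZX_Y
  norm_num only at this
  exact ⟨Fin 2 × Fin 2, inferInstance, inferInstance, _, by simp, this⟩

theorem hrF_5 : HRF 5 8 := by
  obtain ⟨L, R, hL, hR, hLR⟩ := hr_LR
  have := hr_ext (-1) (-1) _ hrY _ hL (by simp [hrYT]) (by simp [hrYY])
    (by norm_num only; exact hr_ZX) hr_ZX_Y
  norm_num only at this
  exact ⟨HR4 × Fin 2, inferInstance, inferInstance, _, by simp, this⟩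

/-- symbol data -/
def HRS (n : ℕ) (η : ℝ) (c : ℕ) (Q : Prop) : Prop :=
  ∃ (κ : Type) (_ : Fintype κ) (_ : DecidableEq κ) (e : Fin n → Matrix κ κ ℝ) (ε : Matrix κ κ ℝ),
    Fintype.card κ = c ∧ HRCl (-η) e ∧ εᵀ = η • ε ∧ ε * ε = η • 1 ∧ (∀ i, ε * e i = -(e i * ε)) ∧
    (Q → ∃ I J : Matrix κ κ ℝ, I * I = -1 ∧ J * J = -1 ∧ I * J = -(J * I) ∧ ε * I = I * ε ∧
        ε * J = J * ε ∧ (∀ i, e i * I = I * e i) ∧ (∀ i, e i * J = J * e i))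

theorem hrS_step (n c m : ℕ) (η : ℝ) (hη : η = 1 ∨ η = -1) (Q : Prop) (h : HRS n η c Q) :
    HRS (n + 8 * m) η (16 ^ m * c) Q := by
  induction m with
  | zero => simpa using h
  | succ m ih =>
    obtain ⟨κ, _, _, e, ε, hc, he, hε1, hε2, hε3, hQ⟩ := ih
    obtain ⟨ω, G, h1, h2, h3, h4⟩ := hr_period (-η) (by rcases hη with rfl | rfl <;> simp)
    have := hr_ext (-η) 1 e ω G he h1 h2 h3 h4
    rw [mul_one] at this
    rw [one_smul] at h1 h2
    refine ⟨κ × ((HR4 × Fin 2) × Fin 2), inferInstance, inferInstance, _, ε ⊗ₖ ω, ?_, this, ?_, ?_, ?_, ?_⟩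
    · rw [Fintype.card_prod, hc]
      simp [pow_succ]; ring
    · rw [hr_kT, hε1, h1, Matrix.smul_kronecker]
    · rw [← Matrix.mul_kronecker_mul, hε2, h2, Matrix.smul_kronecker, Matrix.one_kronecker_one]
    · intro i
      refine Fin.addCases (m := n + 8 * m) (n := 8) (fun i => ?_) (fun i => ?_) i
      · rw [Fin.append_left, ← Matrix.mul_kronecker_mul, ← Matrix.mul_kronecker_mul, hε3, hr_negk]
      · rw [Fin.append_right, ← Matrix.mul_kronecker_mul, ← Matrix.mul_kronecker_mul, h4, hr_kneg,
          one_mul, mul_one]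
    · intro q
      obtain ⟨I, J, hI, hJ, hIJ, hεI, hεJ, heI, heJ⟩ := hQ q
      refine ⟨I ⊗ₖ 1, J ⊗ₖ 1, ?_, ?_, ?_, ?_, ?_, ?_, ?_⟩
      · rw [← Matrix.mul_kronecker_mul, hI, hr_negk, one_mul, Matrix.one_kronecker_one]
      · rw [← Matrix.mul_kronecker_mul, hJ, hr_negk, one_mul, Matrix.one_kronecker_one]
      · rw [← Matrix.mul_kronecker_mul, ← Matrix.mul_kronecker_mul, hIJ, hr_negk]
      · rw [← Matrix.mul_kronecker_mul, ← Matrix.mul_kronecker_mul, hεI, one_mul, mul_one]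
      · rw [← Matrix.mul_kronecker_mul, ← Matrix.mul_kronecker_mul, hεJ, one_mul, mul_one]
      · intro i
        refine Fin.addCases (m := n + 8 * m) (n := 8) (fun i => ?_) (fun i => ?_) i
        · simp only [Fin.append_left, ← Matrix.mul_kronecker_mul, heI, one_mul, mul_one]
        · simp only [Fin.append_right, ← Matrix.mul_kronecker_mul, one_mul, mul_one]
      · intro i
        refine Fin.addCases (m := n + 8 * m) (n := 8) (fun i => ?_) (fun i => ?_) i
        · simp only [Fin.append_left, ← Matrix.mul_kronecker_mul, heJ, one_mul, mul_one]
        · simp only [Fin.append_right, ← Matrix.mul_kronecker_mul, one_mul, mul_one]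

theorem hrS_mono (n m c : ℕ) (η : ℝ) (Q : Prop) (h : HRS n η c Q) (hm : m ≤ n) : HRS m η c Q := by
  obtain ⟨κ, _, _, e, ε, hc, he, hε1, hε2, hε3, hQ⟩ := h
  refine ⟨κ, inferInstance, inferInstance, _, ε, hc, he.comp (Fin.castLE hm) (Fin.castLE_injective hm),
    hε1, hε2, fun i => hε3 _, fun q => ?_⟩
  obtain ⟨I, J, hI, hJ, hIJ, hεI, hεJ, heI, heJ⟩ := hQ q
  exact ⟨I, J, hI, hJ, hIJ, hεI, hεJ, fun i => heI _, fun i => heJ _⟩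

theorem hrS_2 : HRS 2 (-1) 2 False :=
  ⟨Fin 2, inferInstance, inferInstance, _, hrY, by simp, by rw [neg_neg]; exact hr_ZX, by simp [hrYT],
    by simp [hrYY], hr_ZX_Y, False.elim⟩

theorem hrS_4 : HRS 4 1 8 True := by
  obtain ⟨L, R, hL, hR, hLR⟩ := hr_LR
  have h4 := hr_ext (-1) 1 L hrXX (fun _ : Fin 1 => hrY) hL (by simp [hrXT]) (by simp [hrXX2])
    (by rw [mul_one]; exact hrYs) (fun _ => by rw [hrYX, neg_neg])
  rw [mul_one] at h4
  have hsq := fun i => hR.sq i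
  simp only [neg_smul, one_smul] at hsq
  refine ⟨HR4 × Fin 2, inferInstance, inferInstance, _, 1 ⊗ₖ hrZ, by simp, h4, ?_, ?_, ?_, fun _ =>
    ⟨R 0 ⊗ₖ 1, R 1 ⊗ₖ 1, ?_, ?_, ?_, ?_, ?_, ?_, ?_⟩⟩
  · simp [hr_kT, hrZT]
  · simp [← Matrix.mul_kronecker_mul, hrZZ]
  · intro i
    refine Fin.addCases (m := 3) (n := 1) (fun i => ?_) (fun i => ?_) i
    · simp only [Fin.append_left, ← Matrix.mul_kronecker_mul, hrXZ, hr_kneg, neg_neg, one_mul, mul_one]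
    · simp only [Fin.append_right, ← Matrix.mul_kronecker_mul, hrYZ, hr_kneg, neg_neg, one_mul, mul_one]
  · simp [← Matrix.mul_kronecker_mul, hsq, hr_negk]
  · simp [← Matrix.mul_kronecker_mul, hsq, hr_negk]
  · simp [← Matrix.mul_kronecker_mul, hR.anti 0 1 (by decide), hr_negk]
  · simp [← Matrix.mul_kronecker_mul]
  · simp [← Matrix.mul_kronecker_mul]
  · intro i
    refine Fin.addCases (m := 3) (n := 1) (fun i => ?_) (fun i => ?_) i
    · simp only [Fin.append_left, ← Matrix.mul_kronecker_mul, hLR, one_mul, mul_one]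
    · simp only [Fin.append_right, ← Matrix.mul_kronecker_mul, one_mul, mul_one]
  · intro i
    refine Fin.addCases (m := 3) (n := 1) (fun i => ?_) (fun i => ?_) i
    · simp only [Fin.append_left, ← Matrix.mul_kronecker_mul, hLR, one_mul, mul_one]
    · simp only [Fin.append_right, ← Matrix.mul_kronecker_mul, one_mul, mul_one]

theorem hrS_6 : HRS 6 (-1) 16 True := by
  obtain ⟨L, R, hL, hR, hLR⟩ := hr_LR
  have h5 := hr_ext (-1) (-1) _ hrY _ hL (by simp [hrYT]) (by simp [hrYY])
    (by norm_num only; exact hr_ZX) hr_ZX_Y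
  have h6 := hr_ext (-1 * -1) 1 _ hrXX (fun _ : Fin 1 => hrZ) h5 (by simp [hrXT]) (by simp [hrXX2])
    (by norm_num only; exact hr_single _ _ (by simp [hrZT]) (by simp [hrZZ])) (fun _ => hrXZ)
  have hsq := fun i => hR.sq i
  simp only [neg_smul, one_smul] at hsq
  have hcomm : ∀ (k : Fin 3) (i : Fin (3 + (1 + 1) + 1)), (Fin.append (fun i => Fin.append (fun i => L i ⊗ₖ hrY)
      (fun j => (1 : Matrix HR4 HR4 ℝ) ⊗ₖ Fin.append (fun _ : Fin 1 => hrZ) (fun _ : Fin 1 => hrXX) j) i ⊗ₖ hrXX)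
      fun _ : Fin 1 => (1 : Matrix (HR4 × Fin 2) (HR4 × Fin 2) ℝ) ⊗ₖ hrZ) i *
        ((R k ⊗ₖ (1 : Matrix (Fin 2) (Fin 2) ℝ)) ⊗ₖ (1 : Matrix (Fin 2) (Fin 2) ℝ)) =
        ((R k ⊗ₖ (1 : Matrix (Fin 2) (Fin 2) ℝ)) ⊗ₖ (1 : Matrix (Fin 2) (Fin 2) ℝ)) * (Fin.append (fun i => Fin.append (fun i => L i ⊗ₖ hrY)
      (fun j => (1 : Matrix HR4 HR4 ℝ) ⊗ₖ Fin.append (fun _ : Fin 1 => hrZ) (fun _ : Fin 1 => hrXX) j) i ⊗ₖ hrXX)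
      fun _ : Fin 1 => (1 : Matrix (HR4 × Fin 2) (HR4 × Fin 2) ℝ) ⊗ₖ hrZ) i := by
    intro k i
    refine Fin.addCases (fun i => ?_) (fun i => ?_) i
    · rw [Fin.append_left, ← Matrix.mul_kronecker_mul, ← Matrix.mul_kronecker_mul, mul_one, one_mul]
      congr 1
      refine Fin.addCases (fun i => ?_) (fun i => ?_) i
      · simp only [Fin.append_left, ← Matrix.mul_kronecker_mul, hLR, one_mul, mul_one]
      · simp only [Fin.append_right, ← Matrix.mul_kronecker_mul, one_mul, mul_one]
    · simp only [Fin.append_right, ← Matrix.mul_kronecker_mul, one_mul, mul_one]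
  refine ⟨(HR4 × Fin 2) × Fin 2, inferInstance, inferInstance, _, 1 ⊗ₖ hrY, by simp, ?_, ?_, ?_, ?_, fun _ =>
    ⟨(R 0 ⊗ₖ 1) ⊗ₖ 1, (R 1 ⊗ₖ 1) ⊗ₖ 1, ?_, ?_, ?_, ?_, ?_, hcomm 0, hcomm 1⟩⟩
  · norm_num only at h6 ⊢
    exact h6
  · simp [hr_kT, hrYT, hr_kneg]
  · simp [← Matrix.mul_kronecker_mul, hrYY, hr_kneg]
  · intro i
    refine Fin.addCases (m := 5) (n := 1) (fun i => ?_) (fun i => ?_) i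
    · rw [Fin.append_left, ← Matrix.mul_kronecker_mul, ← Matrix.mul_kronecker_mul, hrYX, hr_kneg,
        mul_one, one_mul]
    · rw [Fin.append_right, ← Matrix.mul_kronecker_mul, ← Matrix.mul_kronecker_mul, hrYZ, hr_kneg,
        mul_one]
  · simp [← Matrix.mul_kronecker_mul, hsq, hr_negk]
  · simp [← Matrix.mul_kronecker_mul, hsq, hr_negk]
  · simp [← Matrix.mul_kronecker_mul, hR.anti 0 1 (by decide), hr_negk]
  · simp [← Matrix.mul_kronecker_mul]
  · simp [← Matrix.mul_kronecker_mul]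
end


theorem hr_const {n N : ℕ} (A : Fin n → Matrix (Fin N) (Fin N) ℝ) (hA : ∀ i, (A i)ᵀ = A i)
    (hinv : ∀ v : Fin n → ℝ, v ≠ 0 → IsUnit (∑ i, v i • A i)) :
    ∃ c₀ : ℝ, 0 < c₀ ∧ ∀ v : Fin n → ℝ, ((∑ i, v i • A i) * (∑ i, v i • A i) -
      (c₀ * ∑ i, v i ^ 2) • (1 : Matrix (Fin N) (Fin N) ℝ)).PosSemidef := by
  let M : (Fin n → ℝ) → Matrix (Fin N) (Fin N) ℝ := fun v => ∑ i, v i • A i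
  have hMT : ∀ v, (M v)ᵀ = M v := by
    intro v; simp only [M, transpose_sum, transpose_smul, hA]
  let g : EuclideanSpace ℝ (Fin n) × EuclideanSpace ℝ (Fin N) → ℝ := fun p =>
    (M p.1 *ᵥ p.2) ⬝ᵥ (M p.1 *ᵥ p.2)
  have hMc : Continuous M := by
    refine continuous_finsetSum _ fun i _ => ?_
    exact (continuous_apply i).smul continuous_const
  have hgc : Continuous g := by
    have h1 : Continuous fun p : EuclideanSpace ℝ (Fin n) × EuclideanSpace ℝ (Fin N) => M p.1 :=
      hMc.comp ((PiLp.continuous_ofLp 2 _).comp continuous_fst)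
    have h2 : Continuous fun p : EuclideanSpace ℝ (Fin n) × EuclideanSpace ℝ (Fin N) =>
      (p.2 : Fin N → ℝ) := (PiLp.continuous_ofLp 2 _).comp continuous_snd
    exact (h1.matrix_mulVec h2).dotProduct (h1.matrix_mulVec h2)
  have hnn : ∀ v w, 0 ≤ (M v *ᵥ w) ⬝ᵥ (M v *ᵥ w) := fun v w => hr_dot_nn _
  have key : ∃ c₀ : ℝ, 0 < c₀ ∧ ∀ v w, c₀ * (∑ i, v i ^ 2) * (w ⬝ᵥ w) ≤ (M v *ᵥ w) ⬝ᵥ (M v *ᵥ w) := by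
    have hK : IsCompact (Metric.sphere (0 : EuclideanSpace ℝ (Fin n)) 1 ×ˢ
      Metric.sphere (0 : EuclideanSpace ℝ (Fin N)) 1) := (isCompact_sphere _ _).prod (isCompact_sphere _ _)
    obtain ⟨c₀, hc, h⟩ : ∃ c₀ : ℝ, 0 < c₀ ∧ ∀ p ∈ (Metric.sphere (0 : EuclideanSpace ℝ (Fin n)) 1 ×ˢ
      Metric.sphere (0 : EuclideanSpace ℝ (Fin N)) 1), c₀ ≤ g p := by
      refine hK.exists_forall_le' hgc.continuousOn (a := 0) ?_
      rintro ⟨v, w⟩ ⟨hv, hw⟩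
      refine lt_of_le_of_ne (hnn _ _) (fun h => ?_)
      have h0 : M v *ᵥ w = 0 := dotProduct_self_eq_zero.1 h.symm
      have hv0 : (v : Fin n → ℝ) ≠ 0 := by
        intro h; have : v = 0 := by ext i; exact congrFun h i
        simp [this] at hv
      have hw0 : (w : Fin N → ℝ) = 0 := by
        have := Matrix.mulVec_injective_of_isUnit (hinv v hv0)
        apply this; simp only [mulVec_zero]; exact h0
      have : w = 0 := by ext i; exact congrFun hw0 i
      simp [this] at hw
    refine ⟨c₀, hc, fun v w => ?_⟩
    by_cases hv : ∑ i, v i ^ 2 = 0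
    · rw [hv]; simpa using hnn v w
    by_cases hw : w ⬝ᵥ w = 0
    · rw [hw]; simpa using hnn v w
    have hv' : 0 < ∑ i, v i ^ 2 := lt_of_le_of_ne (Finset.sum_nonneg fun _ _ => sq_nonneg _) (Ne.symm hv)
    have hw' : 0 < w ⬝ᵥ w := lt_of_le_of_ne (hr_dot_nn _) (Ne.symm hw)
    set a := Real.sqrt (∑ i, v i ^ 2) with ha
    set b := Real.sqrt (w ⬝ᵥ w) with hb
    have haa : a ^ 2 = ∑ i, v i ^ 2 := Real.sq_sqrt hv'.le
    have hbb : b ^ 2 = w ⬝ᵥ w := Real.sq_sqrt hw'.le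
    have ha0 : 0 < a := Real.sqrt_pos.2 hv'
    have hb0 : 0 < b := Real.sqrt_pos.2 hw'
    have := h (a⁻¹ • WithLp.toLp 2 v, b⁻¹ • WithLp.toLp 2 w) (by
      constructor
      · simp only [mem_sphere_iff_norm, sub_zero, norm_smul, norm_inv, Real.norm_eq_abs, abs_of_pos ha0,
          EuclideanSpace.norm_eq, sq_abs]
        rw [← ha]; field_simp
      · simp only [mem_sphere_iff_norm, sub_zero, norm_smul, norm_inv, Real.norm_eq_abs, abs_of_pos hb0,
          EuclideanSpace.norm_eq, sq_abs]
        have : (∑ i, w i ^ 2) = w ⬝ᵥ w := by simp [dotProduct, sq]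
        rw [this, ← hb]; field_simp)
    have hg : g (a⁻¹ • WithLp.toLp 2 v, b⁻¹ • WithLp.toLp 2 w) =
        (a ^ 2)⁻¹ * (b ^ 2)⁻¹ * ((M v *ᵥ w) ⬝ᵥ (M v *ᵥ w)) := by
      have h1 : M (a⁻¹ • v) = a⁻¹ • M v := by
        simp only [M, Finset.smul_sum, smul_smul, Pi.smul_apply, smul_eq_mul]
      change (M (a⁻¹ • v) *ᵥ (b⁻¹ • w)) ⬝ᵥ (M (a⁻¹ • v) *ᵥ (b⁻¹ • w)) = _
      rw [h1, smul_mulVec, mulVec_smul]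
      simp only [dotProduct_smul, smul_dotProduct, smul_eq_mul]
      ring
    rw [hg, haa, hbb] at this
    have h3 := mul_le_mul_of_nonneg_right this (mul_nonneg hv'.le hw'.le)
    calc _ = c₀ * ((∑ i, v i ^ 2) * (w ⬝ᵥ w)) := by ring
      _ ≤ _ := h3
      _ = _ := by field_simp
  obtain ⟨c₀, hc, h⟩ := key
  refine ⟨c₀, hc, fun v => posSemidef_iff_dotProduct_mulVec.2 ⟨?_, fun w => ?_⟩⟩
  · change (M v * M v - _)ᴴ = _
    rw [conjTranspose_eq_transpose_of_trivial]
    rw [transpose_sub, transpose_mul, hMT, transpose_smul, transpose_one]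
  · have h1 := h v w
    simp only [star_trivial]
    change 0 ≤ w ⬝ᵥ ((M v * M v - _) *ᵥ w)
    rw [sub_mulVec, smul_mulVec, one_mulVec, dotProduct_sub, dotProduct_smul, smul_eq_mul]
    have h2 : w ⬝ᵥ ((M v * M v) *ᵥ w) = (M v *ᵥ w) ⬝ᵥ (M v *ᵥ w) := by
      rw [← mulVec_mulVec, dotProduct_mulVec, ← mulVec_transpose, hMT]
    rw [h2]; linarith

theorem hr_dvd {n N : ℕ} (A : Fin n → Matrix (Fin N) (Fin N) ℝ) (hA : ∀ i, (A i)ᵀ = A i)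
    (hinv : ∀ v : Fin n → ℝ, v ≠ 0 → IsUnit (∑ i, v i • A i)) (η : ℝ) (hη : η = 1 ∨ η = -1) (c : ℕ)
    (Q : Prop) (hS : HRS n η c Q) : 2 ^ n ∣ N * c ∧ (Q → 4 ∣ c → 2 ^ n * 4 ∣ N * c) := by
  obtain ⟨c₀, hc₀, hell⟩ := hr_const A hA hinv
  obtain ⟨κ, _, _, e, ε, hc, he, hε1, hε2, hε3, hQ⟩ := hS
  obtain ⟨x, cnt, h1, h2⟩ := hr_star A hA c₀ hc₀ hell e ε η (by rcases hη with rfl | rfl <;> norm_num)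
    he hε1 hε2 hε3
  rw [hc] at h1
  constructor
  · refine (Nat.dvd_add_right (Dvd.intro x rfl)).1 ?_
    rw [h1, mul_assoc]; exact Dvd.intro _ rfl
  · intro q h4
    obtain ⟨I, J, hI, hJ, hIJ, hεI, hεJ, heI, heJ⟩ := hQ q
    have h4x := h2 I J hI hJ hIJ hεI hεJ heI heJ
    refine (Nat.dvd_add_right (Nat.mul_dvd_mul_left (2 ^ n) h4x)).1 ?_
    rw [h1, mul_assoc]
    exact Nat.mul_dvd_mul_left _ ((h4.mul_left _).mul_left _)

theorem hr_upper (N : ℕ) (n n₀ : ℕ) (hn : n₀ ≤ n)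
    (f : EuclideanSpace ℝ (Fin n) →ₗ[ℝ] Matrix (Fin N) (Fin N) ℝ)
    (h1 : ∀ v, (f v)ᵀ = f v) (h2 : ∀ v, v ≠ 0 → IsUnit (f v)) (η : ℝ) (hη : η = 1 ∨ η = -1) (c : ℕ)
    (Q : Prop) (hS : HRS n₀ η c Q) : 2 ^ n₀ ∣ N * c ∧ (Q → 4 ∣ c → 2 ^ n₀ * 4 ∣ N * c) := by
  refine hr_dvd (fun i => f (EuclideanSpace.single (Fin.castLE hn i) 1)) (fun i => h1 _) ?_ η hη c Q hS
  intro v hv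
  have : (∑ i, v i • f (EuclideanSpace.single (Fin.castLE hn i) 1)) =
      f (∑ i, v i • EuclideanSpace.single (Fin.castLE hn i) (1:ℝ)) := by
    rw [map_sum]; simp only [map_smul]
  rw [this]
  apply h2
  intro h0
  apply hv
  funext k
  have := congrArg (fun z : EuclideanSpace ℝ (Fin n) => z (Fin.castLE hn k)) h0
  simpa [Pi.single_apply, (Fin.castLE_injective hn).eq_iff] using this

theorem hr_of_F (N n : ℕ) (h : HRF n N) : ∃ f : EuclideanSpace ℝ (Fin n) →ₗ[ℝ] Matrix (Fin N) (Fin N) ℝ,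
        ∀ v, (f v)ᵀ = f v ∧ (f v) ^ 2 = (‖v‖ ^ 2 : ℝ) • (1 : Matrix (Fin N) (Fin N) ℝ) := by
  obtain ⟨κ, _, _, F, hc, hF⟩ := h
  let ψ : κ ≃ Fin N := Fintype.equivFinOfCardEq hc
  let G : Fin n → Matrix (Fin N) (Fin N) ℝ := fun i => Matrix.reindexAlgEquiv ℝ ℝ ψ (F i)
  have hGT : ∀ i, (G i)ᵀ = G i := by
    intro i
    have := hF.1 i
    rw [one_smul] at this
    simp only [G, Matrix.coe_reindexAlgEquiv, Matrix.transpose_reindex, this]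
  have hGG : ∀ i j, G i * G j + G j * G i = if i = j then (2 : ℝ) • 1 else 0 := by
    intro i j
    simp only [G]
    rw [← map_mul, ← map_mul, ← map_add, hF.2]
    split_ifs
    · rw [map_smul, map_one, mul_one]
    · rw [map_zero]
  refine ⟨{ toFun := fun v => ∑ i, v i • G i, map_add' := ?_, map_smul' := ?_ }, fun v => ⟨?_, ?_⟩⟩
  · intro v w; simp [add_smul, Finset.sum_add_distrib]
  · intro r v; simp [Finset.smul_sum, smul_smul]
  · simp [transpose_sum, hGT]
  · simp only [LinearMap.coe_mk, AddHom.coe_mk]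
    rw [EuclideanSpace.norm_eq, Real.sq_sqrt (Finset.sum_nonneg fun _ _ => sq_nonneg _), sq]
    simp only [Real.norm_eq_abs, sq_abs]
    set S := ∑ i, v i • G i with hS
    have h2 : (2:ℝ) • (S * S) = (2:ℝ) • ((∑ i, v i ^ 2) • 1) := by
      have h3 : S * S = ∑ i, ∑ j, (v i * v j) • (G i * G j) := by
        rw [hS, Finset.sum_mul_sum]
        simp only [smul_mul_smul_comm]
      have h4 : S * S = ∑ i, ∑ j, (v i * v j) • (G j * G i) := by
        rw [h3, Finset.sum_comm]
        simp only [mul_comm (v _) (v _)]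
      rw [two_smul]
      nth_rewrite 1 [h3]
      rw [h4, ← Finset.sum_add_distrib]
      simp only [← Finset.sum_add_distrib, ← smul_add, hGG, smul_ite, smul_zero,
        Finset.sum_ite_eq, Finset.mem_univ, if_true, smul_smul, ← Finset.sum_smul]
      congr 1
      rw [Finset.mul_sum]
      refine Finset.sum_congr rfl fun i _ => by ring
    exact smul_right_injective _ (two_ne_zero) h2

theorem hr_rho_val (N m b : ℕ) (hN : 1 ≤ N) (hb : b < 4) (h : padicValNat 2 N = 4 * m + b) :
    hrRho ((N : ℚ) / 2) + 1 = 8 * m + (![1, 2, 3, 5] : Fin 4 → ℤ) ⟨b, hb⟩ := by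
  have hv : padicValRat 2 ((N : ℚ) / 2) = 4 * m + b - 1 := by
    have hN0 : (N : ℚ) ≠ 0 := by positivity
    have : Fact (Nat.Prime 2) := ⟨Nat.prime_two⟩
    rw [padicValRat.div hN0 two_ne_zero, padicValRat.of_nat, h]
    have : padicValRat 2 2 = 1 := by
      have := padicValRat.self (p := 2) (by norm_num); simpa using this
    rw [this]; push_cast; ring
  rw [hrRho, hv]
  interval_cases b
  · have h1 : (4 * (m:ℤ) + ((0:ℕ):ℤ) - 1) / 4 = m - 1 := by omega
    have h2 : (4 * (m:ℤ) + ((0:ℕ):ℤ) - 1) % 4 = 3 := by omega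
    rw [h1, h2]; simp; ring
  · have h1 : (4 * (m:ℤ) + ((1:ℕ):ℤ) - 1) / 4 = m := by omega
    have h2 : (4 * (m:ℤ) + ((1:ℕ):ℤ) - 1) % 4 = 0 := by omega
    rw [h1, h2]; simp; ring
  · have h1 : (4 * (m:ℤ) + ((2:ℕ):ℤ) - 1) / 4 = m := by omega
    have h2 : (4 * (m:ℤ) + ((2:ℕ):ℤ) - 1) % 4 = 1 := by omega
    rw [h1, h2]; simp; ring
  · have h1 : (4 * (m:ℤ) + ((3:ℕ):ℤ) - 1) / 4 = m := by omega
    have h2 : (4 * (m:ℤ) + ((3:ℕ):ℤ) - 1) % 4 = 2 := by omega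
    rw [h1, h2]; simp; ring

theorem hr_pow16 (m : ℕ) : 16 ^ m = 2 ^ (4 * m) := by rw [pow_mul]; norm_num

theorem hr_cancel (N p q r : ℕ) (h : 2 ^ p ∣ N * 2 ^ q) (hr : p = r + q) : 2 ^ r ∣ N := by
  subst hr
  rw [pow_add] at h
  exact Nat.dvd_of_mul_dvd_mul_right (by positivity) h

theorem hr_lower (N n : ℕ) (hN : 1 ≤ N) (h : (n : ℤ) ≤ hrRho ((N : ℚ) / 2) + 1) : HRF n N := by
  have hb : padicValNat 2 N % 4 < 4 := Nat.mod_lt _ (by norm_num)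
  set m := padicValNat 2 N / 4 with hm
  set b := padicValNat 2 N % 4 with hbd
  have hv : padicValNat 2 N = 4 * m + b := (Nat.div_add_mod _ _).symm
  rw [hr_rho_val N m b hN hb hv] at h
  obtain ⟨o, ho⟩ := pow_padicValNat_dvd (p := 2) (n := N)
  rw [hv, pow_add, ← hr_pow16] at ho
  rw [ho]
  clear_value m b
  apply hrF_odd
  interval_cases b
  · refine hrF_mono _ _ _ (hrF_step 1 1 m hrF_1) ?_
    simp at h; omega
  · refine hrF_mono _ _ _ (hrF_step 2 2 m hrF_2) ?_
    simp at h; omega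
  · refine hrF_mono _ _ _ (hrF_step 3 4 m hrF_3) ?_
    simp at h; omega
  · refine hrF_mono _ _ _ (hrF_step 5 8 m hrF_5) ?_
    simp at h; omega

theorem hr_up (N n : ℕ) (hN : 1 ≤ N)
    (f : EuclideanSpace ℝ (Fin n) →ₗ[ℝ] Matrix (Fin N) (Fin N) ℝ)
    (h1 : ∀ v, (f v)ᵀ = f v) (h2 : ∀ v, v ≠ 0 → IsUnit (f v)) :
    (n : ℤ) ≤ hrRho ((N : ℚ) / 2) + 1 := by
  have : Fact (Nat.Prime 2) := ⟨Nat.prime_two⟩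
  have hb : padicValNat 2 N % 4 < 4 := Nat.mod_lt _ (by norm_num)
  have hnd := pow_succ_padicValNat_not_dvd (p := 2) (n := N) (by omega)
  set m := padicValNat 2 N / 4 with hm
  set b := padicValNat 2 N % 4 with hbd
  have hv : padicValNat 2 N = 4 * m + b := (Nat.div_add_mod _ _).symm
  rw [hr_rho_val N m b hN hb hv]
  rw [hv] at hnd
  clear_value m b
  by_contra hlt
  apply hnd
  have h16 := hr_pow16 m
  interval_cases b
  · simp at hlt
    have := (hr_upper N n (2 + 8 * m) (by omega) f h1 h2 (-1) (Or.inr rfl) _ _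
      (hrS_step 2 2 m (-1) (Or.inr rfl) _ hrS_2)).1
    rw [h16, show 2 ^ (4 * m) * 2 = 2 ^ (4 * m + 1) by ring] at this
    exact hr_cancel _ _ _ _ this (by ring)
  · simp at hlt
    have := (hr_upper N n (3 + 8 * m) (by omega) f h1 h2 1 (Or.inl rfl) _ _
      (hrS_mono (4 + 8 * m) _ _ _ _ (hrS_step 4 8 m 1 (Or.inl rfl) _ hrS_4) (by omega))).2 trivial
        ((by norm_num : 4 ∣ 8).mul_left _)
    rw [h16, show 2 ^ (4 * m) * 8 = 2 ^ (4 * m + 3) by ring,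
      show 2 ^ (3 + 8 * m) * 4 = 2 ^ (8 * m + 5) by ring] at this
    exact hr_cancel _ _ _ _ this (by ring)
  · simp at hlt
    have := (hr_upper N n (4 + 8 * m) (by omega) f h1 h2 1 (Or.inl rfl) _ _
      (hrS_step 4 8 m 1 (Or.inl rfl) _ hrS_4)).2 trivial
        ((by norm_num : 4 ∣ 8).mul_left _)
    rw [h16, show 2 ^ (4 * m) * 8 = 2 ^ (4 * m + 3) by ring,
      show 2 ^ (4 + 8 * m) * 4 = 2 ^ (8 * m + 6) by ring] at this
    exact hr_cancel _ _ _ _ this (by ring)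
  · simp at hlt
    have := (hr_upper N n (6 + 8 * m) (by omega) f h1 h2 (-1) (Or.inr rfl) _ _
      (hrS_step 6 16 m (-1) (Or.inr rfl) _ hrS_6)).2 trivial
        ((by norm_num : 4 ∣ 16).mul_left _)
    rw [h16, show 2 ^ (4 * m) * 16 = 2 ^ (4 * m + 4) by ring,
      show 2 ^ (6 + 8 * m) * 4 = 2 ^ (8 * m + 8) by ring] at this
    exact hr_cancel _ _ _ _ this (by ring)

/-- Entry `𝔤 = 𝔤𝔩(N,ℝ)` of the Hurwitz–Radon value theorem:
`ρ⁽¹⁾ = ρ⁽²⁾ = ρ(N/2) + 1`. -/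
theorem hurwitzRadon_gl_N_R (N : ℕ) (hN : 1 ≤ N) (n : ℕ) :
    ((∃ f : EuclideanSpace ℝ (Fin n) →ₗ[ℝ] Matrix (Fin N) (Fin N) ℝ,
        ∀ v, (f v)ᵀ = f v ∧
          (f v) ^ 2 = (‖v‖ ^ 2 : ℝ) • (1 : Matrix (Fin N) (Fin N) ℝ)) ↔
      (∃ f : EuclideanSpace ℝ (Fin n) →ₗ[ℝ] Matrix (Fin N) (Fin N) ℝ,
        (∀ v, (f v)ᵀ = f v) ∧ ∀ v, v ≠ 0 → IsUnit (f v))) ∧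
    ((∃ f : EuclideanSpace ℝ (Fin n) →ₗ[ℝ] Matrix (Fin N) (Fin N) ℝ,
        (∀ v, (f v)ᵀ = f v) ∧ ∀ v, v ≠ 0 → IsUnit (f v)) ↔
      (n : ℤ) ≤ hrRho ((N : ℚ) / 2) + 1) := by
  have h12 : (∃ f : EuclideanSpace ℝ (Fin n) →ₗ[ℝ] Matrix (Fin N) (Fin N) ℝ,
        ∀ v, (f v)ᵀ = f v ∧
          (f v) ^ 2 = (‖v‖ ^ 2 : ℝ) • (1 : Matrix (Fin N) (Fin N) ℝ)) →
      (∃ f : EuclideanSpace ℝ (Fin n) →ₗ[ℝ] Matrix (Fin N) (Fin N) ℝ,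
        (∀ v, (f v)ᵀ = f v) ∧ ∀ v, v ≠ 0 → IsUnit (f v)) := by
    rintro ⟨f, hf⟩
    refine ⟨f, fun v => (hf v).1, fun v hv => ?_⟩
    have hv' : (‖v‖ ^ 2 : ℝ) ≠ 0 := pow_ne_zero _ (norm_ne_zero_iff.2 hv)
    have h := (hf v).2
    have hu : IsUnit ((f v) ^ 2) := by
      rw [h, ← Algebra.algebraMap_eq_smul_one]
      exact (IsUnit.mk0 _ hv').map (algebraMap ℝ (Matrix (Fin N) (Fin N) ℝ))
    exact (isUnit_pow_iff two_ne_zero).1 hu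
  have h23 : (∃ f : EuclideanSpace ℝ (Fin n) →ₗ[ℝ] Matrix (Fin N) (Fin N) ℝ,
        (∀ v, (f v)ᵀ = f v) ∧ ∀ v, v ≠ 0 → IsUnit (f v)) → (n : ℤ) ≤ hrRho ((N : ℚ) / 2) + 1 := by
    rintro ⟨f, h1, h2⟩
    exact hr_up N n hN f h1 h2
  have h31 := fun h => hr_of_F N n (hr_lower N n hN h)
  exact ⟨⟨h12, fun h => h31 (h23 h)⟩, ⟨h23, fun h => h12 (h31 h)⟩⟩
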